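/- arXiv:0906.2448 — 2 statements merged into one kernel-verified Lean document; each statement's English description precedes it below -/
import Mathlib

section
/- Let f : ℝⁿ → ℝ≥0 be an integrable function whose support K has diameter D < ∞, and suppose that for every line L and every nonnegative affine function l on K ∩ L, the function x ↦ f(x) l(x)^{n-1} is unimodal along L. Then for every partition ℝⁿ = S₁ ∪ S₂ ∪ S₃ into measurable sets, π_f(S₃) ≥ (d(S₁,S₂)/D) · min{π_f(S₁), π_f(S₂)}, where π_f is the probability measure with density proportional to f and d(S₁,S₂) is the minimum distance between S₁ and S₂. -/
open Set MeasureTheory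

namespace Iso

open scoped ENNReal Pointwise

/-- Quasi-concavity of an extended nonnegative function. -/
def QC {E : Type} [AddCommGroup E] [Module ℝ E] (f : E → ℝ≥0∞) : Prop :=
  ∀ x y : E, ∀ a b : ℝ, 0 ≤ a → 0 ≤ b → a + b = 1 → min (f x) (f y) ≤ f (a • x + b • y)

/-- `f * l ^ k` is quasi-concave along segments for every positive affine `l`. -/
def Q {E : Type} [AddCommGroup E] [Module ℝ E] (k : ℕ) (f : E → ℝ≥0∞) : Prop :=
  ∀ x y : E, ∀ a b p q : ℝ, 0 ≤ a → 0 ≤ b → a + b = 1 → 0 < p → 0 < q →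
    min (f x * ENNReal.ofReal p ^ k) (f y * ENNReal.ofReal q ^ k)
      ≤ f (a • x + b • y) * ENNReal.ofReal (a * p + b * q) ^ k

theorem Q.qc {E : Type} [AddCommGroup E] [Module ℝ E] {k : ℕ} {f : E → ℝ≥0∞} (h : Q k f) :
    QC f := by
  intro x y a b ha hb hab
  have := h x y a b 1 1 ha hb hab one_pos one_pos
  simpa [hab] using this

theorem QC.convex {E : Type} [AddCommGroup E] [Module ℝ E] {f : E → ℝ≥0∞} (h : QC f) (c : ℝ≥0∞) :
    Convex ℝ (f ⁻¹' Ici c) := by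
  intro x hx y hy a b ha hb hab
  exact le_trans (le_min hx hy) (h x y a b ha hb hab)

theorem QC.aemeasurable {E : Type} [NormedAddCommGroup E] [NormedSpace ℝ E]
    [FiniteDimensional ℝ E] [MeasurableSpace E] [BorelSpace E] (μ : Measure E)
    [μ.IsAddHaarMeasure] {f : E → ℝ≥0∞} (h : QC f) : AEMeasurable f μ := by
  apply NullMeasurable.aemeasurable
  have : @Measurable (NullMeasurableSpace E μ) _ _ _ f := by
    apply measurable_of_Ici
    intro c
    exact (h.convex c).nullMeasurableSet μ
  intro s hs
  exact this hs

theorem QC.measurable {f : ℝ → ℝ≥0∞} (h : QC f) : Measurable f := by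
  apply measurable_of_Ici
  intro c
  exact (h.convex c).ordConnected.measurableSet

/-- One-dimensional gap lemma. -/
theorem gap (T₁ T₂ : Set ℝ) (h1 : IsClosed T₁) (h2 : IsClosed T₂) (δ : ℝ)
    (hsep : ∀ s ∈ T₁, ∀ t ∈ T₂, δ ≤ |s - t|) (s t : ℝ) (hs : s ∈ T₁) (ht : t ∈ T₂) (hst : s ≤ t) :
    ENNReal.ofReal δ ≤ volume ((T₁ ∪ T₂)ᶜ ∩ Icc s t) := by
  have c1 : IsCompact (T₁ ∩ Icc s t) := isCompact_Icc.inter_left h1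
  obtain ⟨a, ⟨ha1, ha2⟩, ha⟩ := c1.exists_isGreatest ⟨s, hs, le_rfl, hst⟩
  have c2 : IsCompact (T₂ ∩ Icc a t) := isCompact_Icc.inter_left h2
  obtain ⟨b, ⟨hb1, hb2⟩, hb⟩ := c2.exists_isLeast ⟨t, ht, ha2.2, le_rfl⟩
  have hab := hsep a ha1 b hb1
  rw [abs_sub_comm, abs_of_nonneg (sub_nonneg.2 hb2.1)] at hab
  have hsub : Ioo a b ⊆ (T₁ ∪ T₂)ᶜ ∩ Icc s t := by
    intro x hx
    have hxI : x ∈ Icc s t := ⟨ha2.1.trans hx.1.le, hx.2.le.trans hb2.2⟩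
    refine ⟨?_, hxI⟩
    rintro (h | h)
    · exact absurd (ha ⟨h, hxI⟩) (not_le.2 hx.1)
    · exact absurd (hb ⟨h, hx.1.le, hxI.2⟩) (not_le.2 hx.2)
  calc ENNReal.ofReal δ ≤ ENNReal.ofReal (b - a) := ENNReal.ofReal_le_ofReal hab
    _ = volume (Ioo a b) := by rw [Real.volume_Ioo]
    _ ≤ _ := measure_mono hsub

theorem gap' (T₁ T₂ : Set ℝ) (h1 : IsClosed T₁) (h2 : IsClosed T₂) (δ : ℝ)
    (hsep : ∀ s ∈ T₁, ∀ t ∈ T₂, δ ≤ |s - t|) (s t : ℝ) (hs : s ∈ T₁) (ht : t ∈ T₂)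
    (J : Set ℝ) (hJ : Convex ℝ J) (hsJ : s ∈ J) (htJ : t ∈ J) :
    ENNReal.ofReal δ ≤ volume ((T₁ ∪ T₂)ᶜ ∩ J) := by
  rcases le_total s t with h | h
  · exact (gap T₁ T₂ h1 h2 δ hsep s t hs ht h).trans
      (measure_mono (inter_subset_inter_right _ (hJ.ordConnected.out hsJ htJ)))
  · refine (gap T₂ T₁ h2 h1 δ ?_ t s ht hs h).trans ?_
    · intro u hu v hv; rw [abs_sub_comm]; exact hsep v hv u hu
    · rw [union_comm]
      exact (measure_mono (inter_subset_inter_right _ (hJ.ordConnected.out htJ hsJ)))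

/-- One-dimensional isoperimetric inequality for quasi-concave densities. -/
theorem oneDim (F : ℝ → ℝ≥0∞) (hF : QC F) (D δ : ℝ)
    (hD : ∀ s t, F s ≠ 0 → F t ≠ 0 → |s - t| ≤ D)
    (T₁ T₂ : Set ℝ) (h1 : IsClosed T₁) (h2 : IsClosed T₂)
    (hsep : ∀ s ∈ T₁, ∀ t ∈ T₂, δ ≤ |s - t|) :
    ENNReal.ofReal δ * min (∫⁻ t in T₁, F t) (∫⁻ t in T₂, F t)
      ≤ ENNReal.ofReal D * ∫⁻ t in (T₁ ∪ T₂)ᶜ, F t := by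
  have hFm := hF.measurable
  set S : Set ℝ≥0∞ := {r | ∃ s ∈ T₁, ∃ t ∈ T₂, r ≤ F s ∧ r ≤ F t} with hS
  set s0 := sSup S
  have hlow : ENNReal.ofReal δ * s0 ≤ ∫⁻ t in (T₁ ∪ T₂)ᶜ, F t := by
    rw [ENNReal.mul_sSup]
    refine iSup₂_le ?_
    rintro r ⟨s, hs, t, ht, hrs, hrt⟩
    have hJ := hF.convex r
    have hg := gap' T₁ T₂ h1 h2 δ hsep s t hs ht _ hJ hrs hrt
    calc ENNReal.ofReal δ * r ≤ volume ((T₁ ∪ T₂)ᶜ ∩ F ⁻¹' Ici r) * r := by gcongr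
      _ = r * (volume.restrict (T₁ ∪ T₂)ᶜ) {x | r ≤ F x} := by
        rw [mul_comm, inter_comm, ← Measure.restrict_apply (hFm measurableSet_Ici)]
        rfl
      _ ≤ _ := mul_meas_ge_le_lintegral hFm r
  have hup : ∀ T : Set ℝ, MeasurableSet T → (∀ t ∈ T, F t ≤ s0) →
      ∫⁻ t in T, F t ≤ ENNReal.ofReal D * s0 := by
    intro T hT h
    have hsm : MeasurableSet (Function.support F) := measurableSet_support hFm
    calc ∫⁻ t in T, F t ≤ ∫⁻ t in T, (Function.support F).indicator (fun _ => s0) t := by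
          refine setLIntegral_mono' hT ?_
          intro t ht
          by_cases h0 : F t = 0
          · simp [h0]
          · rw [indicator_of_mem (by exact h0)]; exact h t ht
      _ ≤ ∫⁻ t, (Function.support F).indicator (fun _ => s0) t := setLIntegral_le_lintegral _ _
      _ = s0 * volume (Function.support F) := by
          rw [lintegral_indicator hsm, setLIntegral_const]
      _ ≤ s0 * ENNReal.ofReal D := by
          gcongr
          refine (Real.volume_le_diam _).trans ?_
          refine Metric.ediam_le ?_
          intro x hx y hy
          rw [edist_dist, Real.dist_eq]
          exact ENNReal.ofReal_le_ofReal (hD x y hx hy)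
      _ = _ := mul_comm _ _
  have hmain : ∀ T : Set ℝ, MeasurableSet T → (∀ t ∈ T, F t ≤ s0) →
      ENNReal.ofReal δ * ∫⁻ t in T, F t ≤ ENNReal.ofReal D * ∫⁻ t in (T₁ ∪ T₂)ᶜ, F t := by
    intro T hT h
    calc _ ≤ ENNReal.ofReal δ * (ENNReal.ofReal D * s0) := by gcongr; exact hup T hT h
      _ = ENNReal.ofReal D * (ENNReal.ofReal δ * s0) := by ring
      _ ≤ _ := by gcongr
  by_cases hc : ∀ t ∈ T₁, F t ≤ s0
  · exact le_trans (by gcongr; exact min_le_left _ _) (hmain T₁ h1.measurableSet hc)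
  · have hc2 : ∀ t ∈ T₂, F t ≤ s0 := by
      push Not at hc
      obtain ⟨s, hs, hs0⟩ := hc
      intro t ht
      by_contra hlt
      push Not at hlt
      have : min (F s) (F t) ≤ s0 := le_sSup ⟨s, hs, t, ht, min_le_left _ _, min_le_right _ _⟩
      exact absurd this (not_le.2 (lt_min hs0 hlt))
    exact le_trans (by gcongr; exact min_le_right _ _) (hmain T₂ h2.measurableSet hc2)

theorem bm_compact (K L C : Set ℝ) (hK : IsCompact K) (hL : IsCompact L) (hKn : K.Nonempty)
    (hLn : L.Nonempty) (a b : ℝ) (ha : 0 < a) (hb : 0 < b)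
    (hC : ∀ s ∈ K, ∀ t ∈ L, a * s + b * t ∈ C) :
    ENNReal.ofReal a * volume K + ENNReal.ofReal b * volume L ≤ volume C := by
  obtain ⟨k, hk, hkm⟩ := hK.exists_isGreatest hKn
  obtain ⟨l, hl, hlm⟩ := hL.exists_isLeast hLn
  set A : Set ℝ := (fun s => b * l + a * s) '' K
  set B : Set ℝ := (fun t => a * k + b * t) '' L
  have hAB : A ∪ B ⊆ C := by
    rintro _ (⟨s, hs, rfl⟩ | ⟨t, ht, rfl⟩)
    · have := hC s hs l hl; simpa [add_comm] using this
    · exact hC k hk t ht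
  have hA : volume A = ENNReal.ofReal a * volume K := by
    have : A = (fun x => b * l + x) '' (a • K) := by
      simp only [← image_smul, image_image, smul_eq_mul, A]
    rw [this, Set.image_add_left, measure_preimage_add, Measure.addHaar_smul]
    simp [abs_of_pos ha]
  have hB : volume B = ENNReal.ofReal b * volume L := by
    have : B = (fun x => a * k + x) '' (b • L) := by
      simp only [← image_smul, image_image, smul_eq_mul, B]
    rw [this, Set.image_add_left, measure_preimage_add, Measure.addHaar_smul]
    simp [abs_of_pos hb]
  have hBm : MeasurableSet B := (hL.image (by fun_prop)).measurableSet
  have hd : AEDisjoint volume A B := by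
    refine measure_mono_null (t := {a * k + b * l}) ?_ (by simp)
    rintro x ⟨⟨s, hs, rfl⟩, ⟨t, ht, hx⟩⟩
    have h1 := hkm hs
    have h2 := hlm ht
    simp only [mem_singleton_iff] at *
    nlinarith [mul_le_mul_of_nonneg_left h1 ha.le, mul_le_mul_of_nonneg_left h2 hb.le]
  rw [← hA, ← hB, ← measure_union₀ hBm.nullMeasurableSet hd]
  exact measure_mono hAB

theorem bm_meas (A B C : Set ℝ) (hA : MeasurableSet A) (hB : MeasurableSet B) (hAn : A.Nonempty)
    (hBn : B.Nonempty) (a b : ℝ) (ha : 0 < a) (hb : 0 < b)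
    (hC : ∀ s ∈ A, ∀ t ∈ B, a * s + b * t ∈ C) :
    ENNReal.ofReal a * volume A + ENNReal.ofReal b * volume B ≤ volume C := by
  obtain ⟨s0, hs0⟩ := hAn
  obtain ⟨t0, ht0⟩ := hBn
  have key : ∀ K ⊆ A, IsCompact K → ∀ L ⊆ B, IsCompact L →
      ENNReal.ofReal a * volume K + ENNReal.ofReal b * volume L ≤ volume C := by
    intro K hKA hK L hLB hL
    have := bm_compact (insert s0 K) (insert t0 L) C (hK.insert _) (hL.insert _)
      (insert_nonempty _ _) (insert_nonempty _ _) a b ha hb (by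
        intro s hs t ht
        exact hC s (insert_subset hs0 hKA hs) t (insert_subset ht0 hLB ht))
    refine le_trans ?_ this
    gcongr <;> exact subset_insert _ _
  rw [hA.measure_eq_iSup_isCompact, hB.measure_eq_iSup_isCompact]
  simp only [ENNReal.mul_iSup]
  refine ENNReal.biSup_add_biSup_le' (p := fun K => K ⊆ A) (q := fun L => L ⊆ B)
    ⟨∅, by simp⟩ ⟨∅, by simp⟩ ?_
  intro K hKA L hLB
  by_cases hK : IsCompact K <;> by_cases hL : IsCompact L
  · simpa [hK, hL] using key K hKA hK L hLB hL
  · simpa [hK, hL] using key K hKA hK ∅ (by simp) (by simp)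
  · simpa [hK, hL] using key ∅ (by simp) (by simp) L hLB hL
  · simp [hK, hL]

/-- One-dimensional functional Brunn-Minkowski inequality with equal suprema. -/
theorem bm_fun (u v w : ℝ → ℝ) (hu : Measurable u) (hv : Measurable v) (hw : Measurable w)
    (hu0 : ∀ s, 0 ≤ u s) (hv0 : ∀ s, 0 ≤ v s) (hw0 : ∀ s, 0 ≤ w s)
    (hu1 : ∀ s, u s ≤ 1) (hv1 : ∀ s, v s ≤ 1)
    (hus : ∀ τ < 1, ∃ s, τ < u s) (hvs : ∀ τ < 1, ∃ s, τ < v s)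
    (a b : ℝ) (ha : 0 < a) (hb : 0 < b)
    (hC : ∀ s t, min (u s) (v t) ≤ w (a * s + b * t)) :
    ENNReal.ofReal a * (∫⁻ s, ENNReal.ofReal (u s)) + ENNReal.ofReal b * (∫⁻ s, ENNReal.ofReal (v s))
      ≤ ∫⁻ s, ENNReal.ofReal (w s) := by
  rw [lintegral_eq_lintegral_meas_lt _ (ae_of_all _ hu0) hu.aemeasurable,
    lintegral_eq_lintegral_meas_lt _ (ae_of_all _ hv0) hv.aemeasurable,
    lintegral_eq_lintegral_meas_lt _ (ae_of_all _ hw0) hw.aemeasurable]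
  have ma : ∀ u : ℝ → ℝ, Measurable (fun t : ℝ => volume {x | t < u x}) := by
    intro u
    apply Antitone.measurable
    intro s t hst
    exact measure_mono fun x hx => lt_of_le_of_lt hst hx
  rw [← lintegral_const_mul _ (ma u), ← lintegral_const_mul _ (ma v),
    ← lintegral_add_left ((ma u).const_mul _)]
  refine lintegral_mono ?_
  intro τ
  by_cases hτ : τ < 1
  · refine bm_meas _ _ _ (measurableSet_lt measurable_const hu)
      (measurableSet_lt measurable_const hv) (hus τ hτ) (hvs τ hτ) a b ha hb ?_
    intro s hs t ht
    exact lt_of_lt_of_le (lt_min hs ht) (hC s t)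
  · have e1 : {x | τ < u x} = ∅ := by
      ext x; simp only [mem_ofPred_eq, mem_empty_iff_false, iff_false, not_lt]
      exact (hu1 x).trans (not_lt.1 hτ)
    have e2 : {x | τ < v x} = ∅ := by
      ext x; simp only [mem_ofPred_eq, mem_empty_iff_false, iff_false, not_lt]
      exact (hv1 x).trans (not_lt.1 hτ)
    simp [e1, e2]

theorem radon (k : ℕ) (a b c₀ c₁ p q : ℝ) (ha : 0 < a) (hb : 0 < b) (hc₀ : 0 < c₀) (hc₁ : 0 < c₁)
    (hp : 0 < p) (hq : 0 < q) :
    (a * c₀ + b * c₁) ^ (k + 1) / (a * p + b * q) ^ k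
      ≤ a * c₀ ^ (k + 1) / p ^ k + b * c₁ ^ (k + 1) / q ^ k := by
  have hl : 0 < a * p + b * q := by positivity
  have m0 : c₀ / p ∈ Ici (0 : ℝ) := (div_pos hc₀ hp).le
  have m1 : c₁ / q ∈ Ici (0 : ℝ) := (div_pos hc₁ hq).le
  have w0 : 0 ≤ a * p / (a * p + b * q) := by positivity
  have w1 : 0 ≤ b * q / (a * p + b * q) := by positivity
  have h := (convexOn_pow (𝕜 := ℝ) (k + 1)).2 m0 m1 w0 w1 (by field_simp)
  simp only [smul_eq_mul] at h
  have e1 : a * p / (a * p + b * q) * (c₀ / p) + b * q / (a * p + b * q) * (c₁ / q)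
      = (a * c₀ + b * c₁) / (a * p + b * q) := by field_simp
  rw [e1] at h
  have h2 := mul_le_mul_of_nonneg_left h hl.le
  have e2 : (a * p + b * q) * ((a * c₀ + b * c₁) / (a * p + b * q)) ^ (k + 1)
      = (a * c₀ + b * c₁) ^ (k + 1) / (a * p + b * q) ^ k := by
    rw [div_pow]; field_simp; ring
  have e3 : (a * p + b * q) * (a * p / (a * p + b * q) * (c₀ / p) ^ (k + 1)
      + b * q / (a * p + b * q) * (c₁ / q) ^ (k + 1))
      = a * c₀ ^ (k + 1) / p ^ k + b * c₁ ^ (k + 1) / q ^ k := by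
    rw [div_pow, div_pow]; field_simp; ring
  rwa [e2, e3] at h2

theorem exists_root (k : ℕ) (τ : ℝ) (hτ : 0 < τ) : ∃ c : ℝ, 0 < c ∧ c ^ (k + 1) * τ = 1 := by
  refine ⟨(τ⁻¹) ^ (((k + 1 : ℕ) : ℝ)⁻¹), by positivity, ?_⟩
  rw [Real.rpow_inv_natCast_pow (by positivity) (by simp)]
  field_simp

theorem core (k : ℕ) (F₀ F₁ G : ℝ → ℝ≥0∞) (hF₀ : Measurable F₀) (hF₁ : Measurable F₁)
    (hG : Measurable G) (a b p q : ℝ) (ha : 0 < a) (hb : 0 < b) (hp : 0 < p) (hq : 0 < q)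
    (hQ : ∀ s t c₀ c₁ : ℝ, 0 < c₀ → 0 < c₁ →
      min (F₀ s * ENNReal.ofReal c₀ ^ (k + 1)) (F₁ t * ENNReal.ofReal c₁ ^ (k + 1))
        ≤ G (a * s + b * t) * ENNReal.ofReal (a * c₀ + b * c₁) ^ (k + 1))
    (τ₀ τ₁ : ℝ) (hτ₀ : 0 < τ₀) (hτ₁ : 0 < τ₁)
    (h₀ : ∀ r < ENNReal.ofReal τ₀, ∃ s, r < F₀ s) (h₁ : ∀ r < ENNReal.ofReal τ₁, ∃ s, r < F₁ s) :
    min ((∫⁻ s, min (F₀ s) (ENNReal.ofReal τ₀)) * ENNReal.ofReal p ^ k)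
      ((∫⁻ s, min (F₁ s) (ENNReal.ofReal τ₁)) * ENNReal.ofReal q ^ k)
      ≤ (∫⁻ s, G s) * ENNReal.ofReal (a * p + b * q) ^ k := by
  obtain ⟨c₀, hc₀, e₀⟩ := exists_root k τ₀ hτ₀
  obtain ⟨c₁, hc₁, e₁⟩ := exists_root k τ₁ hτ₁
  have hz : 0 < a * c₀ + b * c₁ := by positivity
  -- normalised truncations
  have aux : ∀ (F : ℝ → ℝ≥0∞) (τ c : ℝ), Measurable F → 0 < τ → 0 < c → c ^ (k + 1) * τ = 1 →
      (∀ r < ENNReal.ofReal τ, ∃ s, r < F s) →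
      ∃ U : ℝ → ℝ≥0∞, Measurable U ∧ (∀ s, U s ≤ 1) ∧ (∀ s, U s ≤ F s * ENNReal.ofReal c ^ (k + 1))
        ∧ (∀ r : ℝ, r < 1 → ∃ s, r < (U s).toReal) ∧
        (∫⁻ s, U s = (∫⁻ s, min (F s) (ENNReal.ofReal τ)) * ENNReal.ofReal (c ^ (k + 1))) := by
    intro F τ c hF hτ hc e h
    have e' : ENNReal.ofReal τ * ENNReal.ofReal c ^ (k + 1) = 1 := by
      rw [← ENNReal.ofReal_pow hc.le, ← ENNReal.ofReal_mul hτ.le, mul_comm, e, ENNReal.ofReal_one]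
    have hU1 : ∀ s, min (F s) (ENNReal.ofReal τ) * ENNReal.ofReal c ^ (k + 1) ≤ 1 := by
      intro s
      rw [← e']; gcongr; exact min_le_right _ _
    refine ⟨fun s => min (F s) (ENNReal.ofReal τ) * ENNReal.ofReal c ^ (k + 1),
      (hF.min measurable_const).mul_const _, hU1, ?_, ?_, ?_⟩
    · intro s; dsimp only; gcongr; exact min_le_left _ _
    · intro r hr
      rcases lt_or_ge r 0 with h0 | h0
      · exact ⟨0, lt_of_lt_of_le h0 ENNReal.toReal_nonneg⟩
      · have hlt : ENNReal.ofReal (r * τ) < ENNReal.ofReal τ := by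
          rw [ENNReal.ofReal_lt_ofReal_iff hτ]; nlinarith
        obtain ⟨s, hs⟩ := h _ hlt
        refine ⟨s, ?_⟩
        rw [← ENNReal.ofReal_lt_iff_lt_toReal h0 (ne_top_of_le_ne_top ENNReal.one_ne_top (hU1 s))]
        have e2 : ENNReal.ofReal r = ENNReal.ofReal (r * τ) * ENNReal.ofReal c ^ (k + 1) := by
          rw [ENNReal.ofReal_mul h0, mul_assoc, e', mul_one]
        rw [e2]
        refine ENNReal.mul_lt_mul_left (by positivity) (by finiteness) (lt_min hs hlt)
    · rw [lintegral_mul_const _ (hF.min measurable_const), ENNReal.ofReal_pow hc.le]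
  obtain ⟨U, hUm, hU1, hUF, hUs, hUi⟩ := aux F₀ τ₀ c₀ hF₀ hτ₀ hc₀ e₀ h₀
  obtain ⟨V, hVm, hV1, hVF, hVs, hVi⟩ := aux F₁ τ₁ c₁ hF₁ hτ₁ hc₁ e₁ h₁
  set CZ := ENNReal.ofReal (a * c₀ + b * c₁) ^ (k + 1) with hCZ
  set W : ℝ → ℝ≥0∞ := fun s => min (G s * CZ) 1 with hW
  have hWm : Measurable W := (hG.mul_const _).min measurable_const
  have fin : ∀ {x : ℝ≥0∞}, x ≤ 1 → x ≠ ∞ := fun h => ne_top_of_le_ne_top ENNReal.one_ne_top h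
  have hW1 : ∀ s, W s ≤ 1 := fun s => min_le_right _ _
  have tr : ∀ {x : ℝ≥0∞}, x ≤ 1 → x.toReal ≤ 1 := fun h => by
    simpa using ENNReal.toReal_mono ENNReal.one_ne_top h
  have hbm := bm_fun (fun s => (U s).toReal) (fun s => (V s).toReal) (fun s => (W s).toReal)
    hUm.ennreal_toReal hVm.ennreal_toReal hWm.ennreal_toReal
    (fun _ => ENNReal.toReal_nonneg) (fun _ => ENNReal.toReal_nonneg)
    (fun _ => ENNReal.toReal_nonneg) (fun s => tr (hU1 s)) (fun s => tr (hV1 s)) hUs hVs a b ha hb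
    (by
      intro s t
      rw [← ENNReal.toReal_min (fin (hU1 s)) (fin (hV1 t))]
      refine ENNReal.toReal_mono (fin (hW1 _)) (le_min ?_ ?_)
      · exact (min_le_min (hUF s) (hVF t)).trans (hQ s t c₀ c₁ hc₀ hc₁)
      · exact (min_le_left _ _).trans (hU1 s))
  simp only [ENNReal.ofReal_toReal (fin (hU1 _)), ENNReal.ofReal_toReal (fin (hV1 _)),
    ENNReal.ofReal_toReal (fin (hW1 _))] at hbm
  rw [hUi, hVi] at hbm
  set A := ∫⁻ s, min (F₀ s) (ENNReal.ofReal τ₀)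
  set B := ∫⁻ s, min (F₁ s) (ENNReal.ofReal τ₁)
  have hWi : ∫⁻ s, W s ≤ (∫⁻ s, G s) * CZ := by
    rw [← lintegral_mul_const _ hG]
    exact lintegral_mono fun s => min_le_left _ _
  replace hbm := hbm.trans hWi
  set m := min (A * ENNReal.ofReal p ^ k) (B * ENNReal.ofReal q ^ k) with hm
  set I := ∫⁻ s, G s
  have hl : 0 < a * p + b * q := by positivity
  have part : ∀ (X : ℝ≥0∞) (a c p : ℝ), 0 < a → 0 < c → 0 < p → m ≤ X * ENNReal.ofReal p ^ k →
      m * ENNReal.ofReal (a * c ^ (k + 1) / p ^ k)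
        ≤ ENNReal.ofReal a * (X * ENNReal.ofReal (c ^ (k + 1))) := by
    intro X a c p ha hc hp h
    calc m * ENNReal.ofReal (a * c ^ (k + 1) / p ^ k)
        ≤ X * ENNReal.ofReal p ^ k * ENNReal.ofReal (a * c ^ (k + 1) / p ^ k) := by gcongr
      _ = X * ENNReal.ofReal (a * c ^ (k + 1)) := by
        rw [mul_assoc, ← ENNReal.ofReal_pow hp.le, ← ENNReal.ofReal_mul (by positivity)]
        congr 2; field_simp
      _ = _ := by rw [ENNReal.ofReal_mul ha.le]; ring
  have h1 := part A a c₀ p ha hc₀ hp (min_le_left _ _)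
  have h2 := part B b c₁ q hb hc₁ hq (min_le_right _ _)
  have h3 : m * ENNReal.ofReal ((a * c₀ + b * c₁) ^ (k + 1) / (a * p + b * q) ^ k) ≤ I * CZ := by
    refine le_trans ?_ hbm
    refine le_trans ?_ (add_le_add h1 h2)
    rw [← mul_add, ← ENNReal.ofReal_add (by positivity) (by positivity)]
    gcongr
    exact radon k a b c₀ c₁ p q ha hb hc₀ hc₁ hp hq
  calc m = m * ENNReal.ofReal ((a * c₀ + b * c₁) ^ (k + 1) / (a * p + b * q) ^ k)
        * ENNReal.ofReal ((a * p + b * q) ^ k / (a * c₀ + b * c₁) ^ (k + 1)) := by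
        rw [mul_assoc, ← ENNReal.ofReal_mul (by positivity)]
        rw [div_mul_div_cancel₀ (by positivity), div_self (by positivity), ENNReal.ofReal_one,
          mul_one]
    _ ≤ I * CZ * ENNReal.ofReal ((a * p + b * q) ^ k / (a * c₀ + b * c₁) ^ (k + 1)) := by gcongr
    _ = I * ENNReal.ofReal (a * p + b * q) ^ k := by
        rw [hCZ, mul_assoc, ← ENNReal.ofReal_pow hz.le, ← ENNReal.ofReal_mul (by positivity),
          mul_div_cancel₀ _ (by positivity), ENNReal.ofReal_pow hl.le]

theorem trunc (F : ℝ → ℝ≥0∞) (hF : Measurable F) (c d : ℝ≥0∞) (h : c < (∫⁻ s, F s) * d) :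
    ∃ N : ℕ, 0 < N ∧ ∀ M : ℕ, N ≤ M → c < (∫⁻ s, min (F s) M) * d := by
  have e : ∫⁻ s, F s = ⨆ N : ℕ, ∫⁻ s, min (F s) N := by
    rw [← lintegral_iSup]
    · refine lintegral_congr fun s => ?_
      have h := inf_iSup_eq (F s) (fun N : ℕ => (N : ℝ≥0∞))
      rw [ENNReal.iSup_natCast, inf_top_eq] at h
      exact h
    · intro N; exact hF.min measurable_const
    · intro N M hNM s
      dsimp only
      gcongr
  rw [e, ENNReal.iSup_mul, lt_iSup_iff] at h
  obtain ⟨N, hN⟩ := h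
  refine ⟨N + 1, by simp, fun M hM => hN.trans_le ?_⟩
  gcongr
  omega

/-- Integrating out one real variable. -/
theorem Q.step {E : Type} [AddCommGroup E] [Module ℝ E] (k : ℕ) (f : E × ℝ → ℝ≥0∞)
    (hf : Q (k + 1) f) : Q k (fun x => ∫⁻ s : ℝ, f (x, s)) := by
  intro x y a b p q ha hb hab hp hq
  rcases ha.eq_or_lt with rfl | ha
  · have : b = 1 := by linarith
    subst this
    simp
  rcases hb.eq_or_lt with rfl | hb
  · have : a = 1 := by linarith
    subst this
    simp
  have hfib : ∀ x, Measurable (fun s : ℝ => f (x, s)) := by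
    intro x
    apply QC.measurable
    intro s t a b ha hb hab
    have := hf.qc (x, s) (x, t) a b ha hb hab
    simpa [← add_smul, hab] using this
  have key : ∀ M : ℕ, 0 < M → min ((∫⁻ s, min (f (x, s)) M) * ENNReal.ofReal p ^ k)
      ((∫⁻ s, min (f (y, s)) M) * ENNReal.ofReal q ^ k)
      ≤ (∫⁻ s, f (a • x + b • y, s)) * ENNReal.ofReal (a * p + b * q) ^ k := by
    intro M hM
    set m₀ : ℝ≥0∞ := ⨆ s, f (x, s)
    set m₁ : ℝ≥0∞ := ⨆ s, f (y, s)
    by_cases z₀ : m₀ = 0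
    · have : ∀ s, f (x, s) = 0 := by simpa [m₀, iSup_eq_bot] using z₀
      simp [this]
    by_cases z₁ : m₁ = 0
    · have : ∀ s, f (y, s) = 0 := by simpa [m₁] using z₁
      simp [this]
    have fin₀ : min m₀ M ≠ ∞ := ne_top_of_le_ne_top (ENNReal.natCast_ne_top M) (min_le_right _ _)
    have fin₁ : min m₁ M ≠ ∞ := ne_top_of_le_ne_top (ENNReal.natCast_ne_top M) (min_le_right _ _)
    have hMne : (M : ℝ≥0∞) ≠ 0 := by exact_mod_cast hM.ne'
    have pos₀ : 0 < min m₀ M := lt_min (pos_iff_ne_zero.2 z₀) (pos_iff_ne_zero.2 hMne)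
    have pos₁ : 0 < min m₁ M := lt_min (pos_iff_ne_zero.2 z₁) (pos_iff_ne_zero.2 hMne)
    have := core k (fun s => f (x, s)) (fun s => f (y, s)) (fun s => f (a • x + b • y, s))
      (hfib x) (hfib y) (hfib _) a b p q ha hb hp hq
      (by
        intro s t c₀ c₁ hc₀ hc₁
        have := hf (x, s) (y, t) a b c₀ c₁ ha.le hb.le hab hc₀ hc₁
        simpa using this)
      (min m₀ M).toReal (min m₁ M).toReal (ENNReal.toReal_pos pos₀.ne' fin₀)
      (ENNReal.toReal_pos pos₁.ne' fin₁)
      (by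
        intro r hr
        rw [ENNReal.ofReal_toReal fin₀] at hr
        exact lt_iSup_iff.1 (hr.trans_le (min_le_left _ _)))
      (by
        intro r hr
        rw [ENNReal.ofReal_toReal fin₁] at hr
        exact lt_iSup_iff.1 (hr.trans_le (min_le_left _ _)))
    rw [ENNReal.ofReal_toReal fin₀, ENNReal.ofReal_toReal fin₁] at this
    have e₀ : ∀ s, min (f (x, s)) (min m₀ M) = min (f (x, s)) M := fun s => by
      rw [← min_assoc, min_eq_left (le_iSup (fun s => f (x, s)) s)]
    have e₁ : ∀ s, min (f (y, s)) (min m₁ M) = min (f (y, s)) M := fun s => by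
      rw [← min_assoc, min_eq_left (le_iSup (fun s => f (y, s)) s)]
    simpa only [e₀, e₁] using this
  refine le_of_forall_lt fun c hc => ?_
  rw [lt_min_iff] at hc
  obtain ⟨N, hN, hN'⟩ := trunc _ (hfib x) c _ hc.1
  obtain ⟨N₁, hN₁, hN₁'⟩ := trunc _ (hfib y) c _ hc.2
  exact (lt_min (hN' (max N N₁) (le_max_left _ _)) (hN₁' (max N N₁) (le_max_right _ _))).trans_le
    (key (max N N₁) (by omega))

theorem Q.marg (m : ℕ) : ∀ {E : Type} [AddCommGroup E] [Module ℝ E] (k : ℕ)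
    (f : E × (Fin m → ℝ) → ℝ≥0∞), Q (k + m) f →
    Q k (fun x => ∫⁻ y : Fin m → ℝ, f (x, y)) := by
  induction m with
  | zero =>
    intro E _ _ k f hf
    have : ∀ x, ∫⁻ y : Fin 0 → ℝ, f (x, y) = f (x, 0) := by
      intro x
      rw [Measure.volume_pi_eq_dirac (0 : Fin 0 → ℝ), lintegral_dirac]
    simp only [this]
    intro x y a b p q ha hb hab hp hq
    simpa using hf (x, 0) (y, 0) a b p q ha hb hab hp hq
  | succ m ih =>
    intro E _ _ k f hf
    let f' : (E × ℝ) × (Fin m → ℝ) → ℝ≥0∞ := fun z => f (z.1.1, Fin.cons z.1.2 z.2)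
    have hcons : ∀ (a b s t : ℝ) (u v : Fin m → ℝ),
        (Fin.cons (a • s + b • t) (a • u + b • v) : Fin (m + 1) → ℝ)
          = a • (Fin.cons s u : Fin (m + 1) → ℝ) + b • (Fin.cons t v : Fin (m + 1) → ℝ) := by
      intro a b s t u v
      ext i
      refine Fin.cases ?_ (fun i => ?_) i <;> simp
    have hf' : Q ((k + 1) + m) f' := by
      intro x y a b p q ha hb hab hp hq
      have := hf (x.1.1, Fin.cons x.1.2 x.2) (y.1.1, Fin.cons y.1.2 y.2) a b p q ha hb hab hp hq
      rw [show k + 1 + m = k + (m + 1) by ring]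
      simp only [f', Prod.fst_add, Prod.smul_fst, Prod.snd_add, Prod.smul_snd, hcons]
      exact this
    have h1 := (ih (k + 1) f' hf').step k _
    convert h1 using 2 with x
    have hmp := (volume_preserving_piFinSuccAbove (fun _ : Fin (m + 1) => ℝ) 0).symm
    rw [← hmp.lintegral_comp_emb (MeasurableEquiv.measurableEmbedding _)]
    have e : ∀ z : ℝ × (Fin m → ℝ),
        (MeasurableEquiv.piFinSuccAbove (fun _ : Fin (m + 1) => ℝ) 0).symm z
          = Fin.cons z.1 z.2 := by
      intro z
      simp [MeasurableEquiv.piFinSuccAbove]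
      rfl
    simp only [e]
    rw [Measure.volume_eq_prod, lintegral_prod]
    apply QC.aemeasurable
    intro z w a b ha hb hab
    have := hf.qc (x, Fin.cons z.1 z.2) (x, Fin.cons w.1 w.2) a b ha hb hab
    simp only [Prod.fst_add, Prod.smul_fst, Prod.snd_add, Prod.smul_snd, hcons]
    simpa [← add_smul, hab] using this

theorem null_line {n : ℕ} (i j : Fin n) (hij : i ≠ j) (α β c d : ℝ) (h0 : α ≠ 0 ∨ β ≠ 0) :
    volume {x : EuclideanSpace ℝ (Fin n) | α * (x i - c) + β * (x j - d) = 0} = 0 := by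
  rcases eq_empty_or_nonempty {x : EuclideanSpace ℝ (Fin n) | α * (x i - c) + β * (x j - d) = 0}
    with he | ⟨q, hq⟩
  · rw [he]; simp
  let L : EuclideanSpace ℝ (Fin n) →ₗ[ℝ] ℝ :=
    { toFun := fun x => α * x i + β * x j
      map_add' := by intro x y; simp; ring
      map_smul' := by intro r x; simp; ring }
  have hL : L.ker ≠ ⊤ := by
    intro h
    rw [LinearMap.ker_eq_top] at h
    rcases h0 with h0 | h0
    · apply h0
      have := LinearMap.congr_fun h (EuclideanSpace.single i 1)
      simpa [L, hij.symm] using this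
    · apply h0
      have := LinearMap.congr_fun h (EuclideanSpace.single j 1)
      simpa [L, hij] using this
  refine measure_mono_null ?_
    (Measure.addHaar_affineSubspace volume (AffineSubspace.mk' q L.ker) ?_)
  · intro x hx
    simp only [SetLike.mem_coe, AffineSubspace.mem_mk', vsub_eq_sub, LinearMap.mem_ker, map_sub]
    simp only [mem_ofPred_eq] at hx hq
    simp only [L, LinearMap.coe_mk, AddHom.coe_mk]
    linarith
  · intro h
    apply hL
    have := congrArg AffineSubspace.direction h
    simpa using this

theorem bisect {n : ℕ} (g h : EuclideanSpace ℝ (Fin n) → ℝ) (hg : Integrable g)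
    (hh : Integrable h) (K : Set (EuclideanSpace ℝ (Fin n))) (hK : MeasurableSet K)
    (hgK : 0 < ∫ x in K, g x) (hhK : 0 < ∫ x in K, h x) (i j : Fin n) (hij : i ≠ j) (p : ℝ × ℝ) :
    ∃ α β : ℝ, (α ≠ 0 ∨ β ≠ 0) ∧
      0 < ∫ x in K ∩ {x | 0 ≤ α * (x i - p.1) + β * (x j - p.2)}, g x ∧
      0 < ∫ x in K ∩ {x | 0 ≤ α * (x i - p.1) + β * (x j - p.2)}, h x := by
  let l : ℝ → EuclideanSpace ℝ (Fin n) → ℝ := fun θ x =>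
    Real.cos θ * (x i - p.1) + Real.sin θ * (x j - p.2)
  let H : ℝ → Set (EuclideanSpace ℝ (Fin n)) := fun θ => {x | 0 ≤ l θ x}
  have hcs : ∀ θ, Real.cos θ ≠ 0 ∨ Real.sin θ ≠ 0 := by
    intro θ
    by_contra hc
    push Not at hc
    have := Real.sin_sq_add_cos_sq θ
    rw [hc.1, hc.2] at this
    norm_num at this
  have hlx : ∀ θ, Continuous (l θ) := by intro θ; dsimp only [l]; fun_prop
  have hlθ : ∀ x, Continuous (fun θ => l θ x) := by intro x; dsimp only [l]; fun_prop
  have hHm : ∀ θ, MeasurableSet (H θ) := fun θ =>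
    measurableSet_le measurable_const (hlx θ).measurable
  have hae : ∀ θ, ∀ᵐ x : EuclideanSpace ℝ (Fin n), l θ x ≠ 0 := by
    intro θ
    rw [ae_iff]
    simpa using null_line i j hij (Real.cos θ) (Real.sin θ) p.1 p.2 (hcs θ)
  have hπ : ∀ θ x, l (θ + Real.pi) x = - l θ x := by
    intro θ x; simp only [l, Real.cos_add_pi, Real.sin_add_pi]; ring
  have hsum : ∀ (g : EuclideanSpace ℝ (Fin n) → ℝ), Integrable g → ∀ θ,
      (∫ x in K ∩ H θ, g x) + (∫ x in K ∩ H (θ + Real.pi), g x) = ∫ x in K, g x := by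
    intro g hg θ
    rw [← setIntegral_indicator (hHm _), ← setIntegral_indicator (hHm _), ← integral_add]
    · apply integral_congr_ae
      filter_upwards [ae_restrict_of_ae (hae θ)] with x hx
      by_cases hp : 0 ≤ l θ x
      · have h1 : x ∈ H θ := hp
        have h2 : x ∉ H (θ + Real.pi) := by
          simp only [H, mem_ofPred_eq, hπ, not_le]
          have := lt_of_le_of_ne hp hx.symm
          linarith
        simp [h1, h2]
      · have h1 : x ∉ H θ := hp
        have h2 : x ∈ H (θ + Real.pi) := by
          simp only [H, mem_ofPred_eq, hπ]
          linarith
        simp [h1, h2]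
    · exact hg.restrict.indicator (hHm _)
    · exact hg.restrict.indicator (hHm _)
  have hcont : Continuous (fun θ => ∫ x in K ∩ H θ, g x) := by
    simp_rw [← setIntegral_indicator (hHm _)]
    rw [continuous_iff_continuousAt]
    intro θ
    refine tendsto_integral_filter_of_dominated_convergence (fun x => ‖g x‖) ?_ ?_ ?_ ?_
    · exact Filter.Eventually.of_forall fun θ =>
        (hg.restrict.indicator (hHm _)).aestronglyMeasurable
    · exact Filter.Eventually.of_forall fun θ => ae_of_all _ fun x => norm_indicator_le_norm_self _ _
    · exact hg.norm.restrict
    · filter_upwards [ae_restrict_of_ae (hae θ)] with x hx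
      apply tendsto_const_nhds.congr'
      rcases lt_or_gt_of_ne hx with hx | hx
      · filter_upwards [(hlθ x).continuousAt.eventually (gt_mem_nhds hx)] with θ₂ hθ₂
        have h1 : x ∉ H θ := not_le.2 hx
        have h2 : x ∉ H θ₂ := not_le.2 hθ₂
        simp [h1, h2]
      · filter_upwards [(hlθ x).continuousAt.eventually (lt_mem_nhds hx)] with θ₂ hθ₂
        have h1 : x ∈ H θ := hx.le
        have h2 : x ∈ H θ₂ := le_of_lt hθ₂
        simp [h1, h2]
  have h0 := hsum g hg 0
  obtain ⟨θ, hθ⟩ : (∫ x in K, g x) / 2 ∈ range (fun θ => ∫ x in K ∩ H θ, g x) := by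
    rcases le_total (∫ x in K ∩ H 0, g x) ((∫ x in K, g x) / 2) with hle | hle
    · exact mem_range_of_exists_le_of_exists_ge hcont ⟨0, hle⟩ ⟨0 + Real.pi, by linarith⟩
    · exact mem_range_of_exists_le_of_exists_ge hcont ⟨0 + Real.pi, by linarith⟩ ⟨0, hle⟩
  dsimp only at hθ
  have hgs := hsum g hg θ
  have hhs := hsum h hh θ
  rcases lt_or_ge 0 (∫ x in K ∩ H θ, h x) with hp | hp
  · exact ⟨Real.cos θ, Real.sin θ, hcs θ, by change 0 < ∫ x in K ∩ H θ, g x; linarith, hp⟩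
  · refine ⟨Real.cos (θ + Real.pi), Real.sin (θ + Real.pi), hcs _, ?_, ?_⟩
    · change 0 < ∫ x in K ∩ H (θ + Real.pi), g x; linarith
    · change 0 < ∫ x in K ∩ H (θ + Real.pi), h x; linarith

/-- If every point of a dense family lies on the boundary of a half plane containing the three
points, then the points are collinear. -/
theorem collinear_of_dense (x₁ x₂ y₁ y₂ z₁ z₂ : ℝ) (d : ℕ → ℝ × ℝ) (hd : DenseRange d)
    (H : ∀ m, ∃ α β : ℝ, (α ≠ 0 ∨ β ≠ 0) ∧ 0 ≤ α * (x₁ - (d m).1) + β * (x₂ - (d m).2) ∧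
      0 ≤ α * (y₁ - (d m).1) + β * (y₂ - (d m).2) ∧ 0 ≤ α * (z₁ - (d m).1) + β * (z₂ - (d m).2)) :
    (y₁ - x₁) * (z₂ - x₂) = (y₂ - x₂) * (z₁ - x₁) := by
  by_contra hne
  set Δ := (y₁ - x₁) * (z₂ - x₂) - (y₂ - x₂) * (z₁ - x₁) with hΔ
  have hΔ0 : Δ ≠ 0 := sub_ne_zero.2 hne
  let s : ℝ × ℝ → ℝ := fun p => ((p.1 - x₁) * (z₂ - x₂) - (p.2 - x₂) * (z₁ - x₁)) / Δ
  let t : ℝ × ℝ → ℝ := fun p => ((y₁ - x₁) * (p.2 - x₂) - (y₂ - x₂) * (p.1 - x₁)) / Δ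
  have hs : Continuous s := by dsimp only [s]; fun_prop
  have ht : Continuous t := by dsimp only [t]; fun_prop
  have hO : IsOpen {p | 0 < s p ∧ 0 < t p ∧ s p + t p < 1} :=
    (isOpen_lt continuous_const hs).inter ((isOpen_lt continuous_const ht).inter
      (isOpen_lt (hs.add ht) continuous_const))
  have hc1 : s ((x₁ + y₁ + z₁) / 3, (x₂ + y₂ + z₂) / 3) = 1 / 3 := by
    simp only [s]; rw [div_eq_iff hΔ0, hΔ]; ring
  have hc2 : t ((x₁ + y₁ + z₁) / 3, (x₂ + y₂ + z₂) / 3) = 1 / 3 := by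
    simp only [t]; rw [div_eq_iff hΔ0, hΔ]; ring
  obtain ⟨m, hm⟩ := hd.exists_mem_open hO
    ⟨((x₁ + y₁ + z₁) / 3, (x₂ + y₂ + z₂) / 3), by
      simp only [mem_ofPred_eq, hc1, hc2]; norm_num⟩
  obtain ⟨α, β, h0, hx, hy, hz⟩ := H m
  set p := d m
  obtain ⟨ps, pt, pst⟩ := hm
  have e1 : p.1 - x₁ = s p * (y₁ - x₁) + t p * (z₁ - x₁) := by
    simp only [s, t]; field_simp; rw [hΔ]; ring
  have e2 : p.2 - x₂ = s p * (y₂ - x₂) + t p * (z₂ - x₂) := by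
    simp only [s, t]; field_simp; rw [hΔ]; ring
  generalize s p = S at *
  generalize t p = T at *
  have esum : (1 - S - T) * (α * (x₁ - p.1) + β * (x₂ - p.2)) + S * (α * (y₁ - p.1) + β * (y₂ - p.2))
      + T * (α * (z₁ - p.1) + β * (z₂ - p.2)) = 0 := by
    linear_combination (-α) * e1 + (-β) * e2
  have hw : 0 < 1 - S - T := by linarith
  have p1 := mul_nonneg hw.le hx
  have p2 := mul_nonneg ps.le hy
  have p3 := mul_nonneg pt.le hz
  have zx : α * (x₁ - p.1) + β * (x₂ - p.2) = 0 := by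
    have : (1 - S - T) * (α * (x₁ - p.1) + β * (x₂ - p.2)) = 0 := by linarith
    exact (mul_eq_zero.1 this).resolve_left hw.ne'
  have zy : α * (y₁ - p.1) + β * (y₂ - p.2) = 0 := by
    have : S * (α * (y₁ - p.1) + β * (y₂ - p.2)) = 0 := by linarith
    exact (mul_eq_zero.1 this).resolve_left ps.ne'
  have zz : α * (z₁ - p.1) + β * (z₂ - p.2) = 0 := by
    have : T * (α * (z₁ - p.1) + β * (z₂ - p.2)) = 0 := by linarith
    exact (mul_eq_zero.1 this).resolve_left pt.ne'
  have hα : α * Δ = 0 := by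
    rw [hΔ]; linear_combination (z₂ - x₂) * (zy - zx) - (y₂ - x₂) * (zz - zx)
  have hβ : β * Δ = 0 := by
    rw [hΔ]; linear_combination (y₁ - x₁) * (zz - zx) - (z₁ - x₁) * (zy - zx)
  rcases h0 with h0 | h0
  · exact (mul_ne_zero h0 hΔ0) hα
  · exact (mul_ne_zero h0 hΔ0) hβ

/-- Bisection: convex pieces concentrating along a line on which both integrals stay positive. -/
theorem exists_thin {n : ℕ} (i₀ : Fin n) (g h : EuclideanSpace ℝ (Fin n) → ℝ) (hg : Integrable g)
    (hh : Integrable h) (K₀ : Set (EuclideanSpace ℝ (Fin n))) (hK₀ : IsCompact K₀)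
    (hKc : Convex ℝ K₀)
    (hgK : 0 < ∫ x in K₀, g x) (hhK : 0 < ∫ x in K₀, h x) :
    ∃ (x₀ u : EuclideanSpace ℝ (Fin n)) (i : Fin n), u i = 1 ∧ ∀ ε > 0,
      ∃ K : Set (EuclideanSpace ℝ (Fin n)), IsCompact K ∧ Convex ℝ K ∧
        0 < ∫ x in K, g x ∧ 0 < ∫ x in K, h x ∧
        ∀ x ∈ K, ‖x - x₀ - (x i - x₀ i) • u‖ < ε := by
  let T := {K : Set (EuclideanSpace ℝ (Fin n)) // IsCompact K ∧ Convex ℝ K ∧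
    0 < ∫ x in K, g x ∧ 0 < ∫ x in K, h x}
  have : Nonempty (Fin n) := ⟨i₀⟩
  obtain ⟨e, he⟩ := exists_surjective_nat (Fin n × Fin n × ℕ)
  let d : ℕ → ℝ × ℝ := TopologicalSpace.denseSeq (ℝ × ℝ)
  have hd : DenseRange d := TopologicalSpace.denseRange_denseSeq _
  have step : ∀ (m : ℕ) (K : T), ∃ K' : T, K'.1 ⊆ K.1 ∧ ((e m).1 ≠ (e m).2.1 →
      ∃ α β : ℝ, (α ≠ 0 ∨ β ≠ 0) ∧ ∀ x ∈ K'.1,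
        0 ≤ α * (x (e m).1 - (d (e m).2.2).1) + β * (x (e m).2.1 - (d (e m).2.2).2)) := by
    intro m K
    by_cases hne : (e m).1 = (e m).2.1
    · exact ⟨K, subset_rfl, fun h => absurd hne h⟩
    · obtain ⟨α, β, h0, h1, h2⟩ := bisect g h hg hh K.1 K.2.1.measurableSet K.2.2.2.1 K.2.2.2.2
        (e m).1 (e m).2.1 hne (d (e m).2.2)
      refine ⟨⟨_, ?_, ?_, h1, h2⟩, inter_subset_left, fun _ => ⟨α, β, h0, fun x hx => hx.2⟩⟩
      · apply K.2.1.inter_right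
        exact isClosed_le continuous_const (by fun_prop)
      · apply K.2.2.1.inter
        intro x hx y hy a b ha hb hab
        simp only [mem_ofPred_eq, PiLp.add_apply, PiLp.smul_apply, smul_eq_mul] at hx hy ⊢
        have hb' : b = 1 - a := by linarith
        have := add_nonneg (mul_nonneg ha hx) (mul_nonneg hb hy)
        subst hb'
        refine this.trans_eq ?_
        ring
  choose nxt hsub hhalf using step
  let KK : ℕ → T := fun m => Nat.rec ⟨K₀, hK₀, hKc, hgK, hhK⟩ (fun m K => nxt m K) m
  have hKK : ∀ m, KK (m + 1) = nxt m (KK m) := fun m => rfl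
  have hanti : Antitone (fun m => (KK m).1) := by
    apply antitone_nat_of_succ_le
    intro m
    rw [hKK]
    exact hsub m (KK m)
  have hne : ∀ m, (KK m).1.Nonempty := by
    intro m
    by_contra hcon
    rw [not_nonempty_iff_eq_empty] at hcon
    have := (KK m).2.2.2.1
    rw [hcon] at this
    simp at this
  have hdir : Directed (· ⊇ ·) (fun m => (KK m).1) := hanti.directed_ge
  obtain ⟨x₀, hx₀⟩ := IsCompact.nonempty_iInter_of_directed_nonempty_isCompact_isClosed
    (fun m => (KK m).1) hdir hne (fun m => (KK m).2.1) (fun m => (KK m).2.1.isClosed)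
  have hcol : ∀ x ∈ ⋂ m, (KK m).1, ∀ y ∈ ⋂ m, (KK m).1, ∀ z ∈ ⋂ m, (KK m).1, ∀ i j : Fin n,
      (y i - x i) * (z j - x j) = (y j - x j) * (z i - x i) := by
    intro x hx y hy z hz i j
    by_cases hij : i = j
    · subst hij; ring
    apply collinear_of_dense _ _ _ _ _ _ d hd
    intro m
    obtain ⟨m', hm'⟩ := he (i, j, m)
    obtain ⟨α, β, h0, hαβ⟩ := hhalf m' (KK m') (by rw [hm']; exact hij)
    rw [← hKK, hm'] at hαβ
    rw [mem_iInter] at hx hy hz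
    exact ⟨α, β, h0, hαβ x (hx (m' + 1)), hαβ y (hy (m' + 1)), hαβ z (hz (m' + 1))⟩
  have hline : ∃ (u : EuclideanSpace ℝ (Fin n)) (i : Fin n), u i = 1 ∧
      ∀ x ∈ ⋂ m, (KK m).1, x - x₀ - (x i - x₀ i) • u = 0 := by
    by_cases hex : ∃ x₁ ∈ ⋂ m, (KK m).1, x₁ ≠ x₀
    · obtain ⟨x₁, hx₁, hne⟩ := hex
      obtain ⟨i, hi⟩ : ∃ i, x₁ i ≠ x₀ i := by
        by_contra hcon
        push Not at hcon
        exact hne (by ext i; exact hcon i)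
      have hi' := sub_ne_zero.2 hi
      refine ⟨(x₁ i - x₀ i)⁻¹ • (x₁ - x₀), i, by simp [hi'], ?_⟩
      intro x hx
      ext j
      have := hcol x₀ hx₀ x₁ hx₁ x hx i j
      simp only [PiLp.sub_apply, PiLp.smul_apply, smul_eq_mul, PiLp.zero_apply]
      field_simp
      linarith
    · push Not at hex
      refine ⟨EuclideanSpace.single i₀ 1, i₀, by simp, ?_⟩
      intro x hx
      rw [hex x hx]
      simp
  obtain ⟨u, i, hu, hline⟩ := hline
  refine ⟨x₀, u, i, hu, fun ε hε => ?_⟩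
  have hO : IsOpen {x : EuclideanSpace ℝ (Fin n) | ‖x - x₀ - (x i - x₀ i) • u‖ < ε} :=
    isOpen_lt (by fun_prop) continuous_const
  obtain ⟨m, hm⟩ := exists_subset_nhds_of_isCompact (V := fun m => (KK m).1) hdir
    (fun m => (KK m).2.1) (U := {x | ‖x - x₀ - (x i - x₀ i) • u‖ < ε}) (by
      intro x hx
      apply hO.mem_nhds
      simp only [mem_ofPred_eq]
      rw [hline x hx]
      simpa using hε)
  exact ⟨(KK m).1, (KK m).2.1, (KK m).2.2.1, (KK m).2.2.2.1, (KK m).2.2.2.2, fun x hx => hm hx⟩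

theorem thin_ineq {m : ℕ} (f : EuclideanSpace ℝ (Fin (m + 1)) → ℝ≥0∞) (hf : Q m f)
    (hfm : AEMeasurable f) (K : Set (EuclideanSpace ℝ (Fin (m + 1)))) (hK : MeasurableSet K)
    (hKc : Convex ℝ K) (i : Fin (m + 1)) (δ D : ℝ) (S₁ S₂ : Set (EuclideanSpace ℝ (Fin (m + 1))))
    (hsep : ∀ x ∈ S₁ ∩ K, ∀ y ∈ S₂ ∩ K, δ ≤ |x i - y i|)
    (hD : ∀ x ∈ K, ∀ y ∈ K, f x ≠ 0 → f y ≠ 0 → |x i - y i| ≤ D) :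
    ENNReal.ofReal δ * min (∫⁻ x in S₁ ∩ K, f x) (∫⁻ x in S₂ ∩ K, f x)
      ≤ ENNReal.ofReal D * ∫⁻ x in (S₁ ∪ S₂)ᶜ ∩ K, f x := by
  set φ := K.indicator f with hφ
  have hφm : AEMeasurable φ := hfm.indicator hK
  have hφQ : Q m φ := by
    intro x y a b p q ha hb hab hp hq
    by_cases hx : x ∈ K
    · by_cases hy : y ∈ K
      · have hz := hKc hx hy ha hb hab
        simp only [hφ, indicator_of_mem hx, indicator_of_mem hy, indicator_of_mem hz]
        exact hf x y a b p q ha hb hab hp hq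
      · simp [hφ, indicator_of_notMem hy]
    · simp [hφ, indicator_of_notMem hx]
  let Ψ : ℝ × (Fin m → ℝ) → EuclideanSpace ℝ (Fin (m + 1)) := fun z =>
    WithLp.toLp 2 ((MeasurableEquiv.piFinSuccAbove (fun _ : Fin (m + 1) => ℝ) i).symm z)
  have hΨ : MeasurePreserving Ψ :=
    (PiLp.volume_preserving_toLp (Fin (m + 1))).comp
      (volume_preserving_piFinSuccAbove (fun _ : Fin (m + 1) => ℝ) i).symm
  have hΨe : MeasurableEmbedding Ψ :=
    (MeasurableEquiv.toLp 2 (Fin (m + 1) → ℝ)).measurableEmbedding.comp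
      (MeasurableEquiv.measurableEmbedding _)
  have hΨi : ∀ z, Ψ z i = z.1 := by
    intro z
    change (Fin.insertNth (α := fun _ => ℝ) i z.1 z.2) i = z.1
    simp
  have hΨj : ∀ z j, Ψ z (i.succAbove j) = z.2 j := by
    intro z j
    change (Fin.insertNth (α := fun _ => ℝ) i z.1 z.2) (i.succAbove j) = z.2 j
    simp
  have hΨl : ∀ (a b : ℝ) z w, Ψ (a • z + b • w) = a • Ψ z + b • Ψ w := by
    intro a b z w
    ext j
    refine Fin.succAboveCases i ?_ (fun j => ?_) j
    · simp only [PiLp.add_apply, PiLp.smul_apply, hΨi]; simp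
    · simp only [PiLp.add_apply, PiLp.smul_apply, hΨj]; simp
  have hQ' : Q (0 + m) (fun z => φ (Ψ z)) := by
    rw [zero_add]
    intro x y a b p q ha hb hab hp hq
    simp only [hΨl]
    exact hφQ _ _ a b p q ha hb hab hp hq
  set F : ℝ → ℝ≥0∞ := fun t => ∫⁻ y : Fin m → ℝ, φ (Ψ (t, y)) with hFdef
  have hF : QC F := (Q.marg m 0 _ hQ').qc
  have hT : ∀ T : Set ℝ, MeasurableSet T → ∫⁻ t in T, F t = ∫⁻ x in {x | x i ∈ T} ∩ K, f x := by
    intro T hT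
    have hTm : MeasurableSet {x : EuclideanSpace ℝ (Fin (m + 1)) | x i ∈ T} := by
      have : Measurable (fun x : EuclideanSpace ℝ (Fin (m + 1)) => x i) := by fun_prop
      exact this hT
    rw [inter_comm {x | x i ∈ T} K, ← setLIntegral_indicator hK, ← lintegral_indicator hTm,
      ← hΨ.lintegral_comp_emb hΨe, Measure.volume_eq_prod, lintegral_prod]
    · rw [← lintegral_indicator hT]
      refine lintegral_congr fun t => ?_
      by_cases ht : t ∈ T
      · rw [indicator_of_mem ht]
        refine lintegral_congr fun y => ?_
        rw [indicator_of_mem]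
        simpa [hΨi] using ht
      · rw [indicator_of_notMem ht]
        symm
        convert lintegral_zero with y
        rw [indicator_of_notMem]
        simpa [hΨi] using ht
    · exact (hφm.indicator hTm).comp_quasiMeasurePreserving hΨ.quasiMeasurePreserving
  set P : EuclideanSpace ℝ (Fin (m + 1)) → ℝ := fun x => x i with hP
  have hsep' : ∀ s ∈ closure (P '' (S₁ ∩ K)), ∀ t ∈ closure (P '' (S₂ ∩ K)), δ ≤ |s - t| := by
    intro s hs t ht
    have hcl : IsClosed {p : ℝ × ℝ | δ ≤ |p.1 - p.2|} :=
      isClosed_le continuous_const (by fun_prop)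
    have hsub : (P '' (S₁ ∩ K)) ×ˢ (P '' (S₂ ∩ K)) ⊆ {p : ℝ × ℝ | δ ≤ |p.1 - p.2|} := by
      rintro ⟨_, _⟩ ⟨⟨x, hx, rfl⟩, ⟨y, hy, rfl⟩⟩
      exact hsep x hx y hy
    have := closure_minimal hsub hcl
    rw [closure_prod_eq] at this
    exact this (mk_mem_prod hs ht)
  have hne : ∀ t, F t ≠ 0 → ∃ x ∈ K, f x ≠ 0 ∧ x i = t := by
    intro t ht
    by_contra hcon
    push Not at hcon
    apply ht
    rw [hFdef]
    convert lintegral_zero with y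
    by_contra hy
    have hyK : Ψ (t, y) ∈ K := by
      by_contra h; exact hy (indicator_of_notMem h _)
    rw [hφ, indicator_of_mem hyK] at hy
    exact hcon _ hyK hy (hΨi _)
  have hmain := oneDim F hF D δ (by
      intro s t hs ht
      obtain ⟨x, hx, hx0, rfl⟩ := hne s hs
      obtain ⟨y, hy, hy0, rfl⟩ := hne t ht
      exact hD x hx y hy hx0 hy0) _ _ isClosed_closure isClosed_closure hsep'
  rw [hT _ isClosed_closure.measurableSet, hT _ isClosed_closure.measurableSet,
    hT _ (isClosed_closure.union isClosed_closure).measurableSet.compl] at hmain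
  have h1 : S₁ ∩ K ⊆ {x | x i ∈ closure (P '' (S₁ ∩ K))} ∩ K := fun x hx =>
    ⟨show x i ∈ closure (P '' (S₁ ∩ K)) from subset_closure ⟨x, hx, rfl⟩, hx.2⟩
  have h2 : S₂ ∩ K ⊆ {x | x i ∈ closure (P '' (S₂ ∩ K))} ∩ K := fun x hx =>
    ⟨show x i ∈ closure (P '' (S₂ ∩ K)) from subset_closure ⟨x, hx, rfl⟩, hx.2⟩
  have h3 : {x | x i ∈ (closure (P '' (S₁ ∩ K)) ∪ closure (P '' (S₂ ∩ K)))ᶜ} ∩ K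
      ⊆ (S₁ ∪ S₂)ᶜ ∩ K := by
    rintro x ⟨hx, hxK⟩
    refine ⟨?_, hxK⟩
    rintro (h | h)
    · exact hx (Or.inl (subset_closure ⟨x, ⟨h, hxK⟩, rfl⟩))
    · exact hx (Or.inr (subset_closure ⟨x, ⟨h, hxK⟩, rfl⟩))
  exact le_trans (mul_le_mul_right (min_le_min (lintegral_mono_set h1) (lintegral_mono_set h2)) _)
    (hmain.trans (mul_le_mul_right (lintegral_mono_set h3) _))

theorem Q_of_uni {n : ℕ} (f : EuclideanSpace ℝ (Fin n) → ℝ) (hnn : ∀ x, 0 ≤ f x)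
    (huni : ∀ a b : EuclideanSpace ℝ (Fin n), ∀ c d : ℝ,
      (∀ t ∈ Icc (0:ℝ) 1, 0 ≤ c + d * t) →
      ∃ tmax ∈ Icc (0:ℝ) 1,
        MonotoneOn (fun t => f ((1 - t) • a + t • b) * (c + d * t) ^ (n - 1))
          (Icc 0 tmax) ∧
        AntitoneOn (fun t => f ((1 - t) • a + t • b) * (c + d * t) ^ (n - 1))
          (Icc tmax 1)) : Q (n - 1) (fun x => ENNReal.ofReal (f x)) := by
  intro x y a b p q ha hb hab hp hq
  have ea : a = 1 - b := by linarith
  subst ea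
  obtain ⟨τ, hτ, hmono, hanti⟩ := huni x y p (q - p) (by
    intro t ht
    nlinarith [mul_nonneg hp.le (sub_nonneg.2 ht.2), mul_nonneg hq.le ht.1])
  have hz : 0 < (1 - b) * p + b * q := by
    rcases hb.eq_or_lt with rfl | hb
    · simpa using hp
    · have := mul_pos hb hq
      have := mul_nonneg ha hp.le
      linarith
  dsimp only
  rw [← ENNReal.ofReal_pow hp.le, ← ENNReal.ofReal_pow hq.le, ← ENNReal.ofReal_pow hz.le,
    ← ENNReal.ofReal_mul (hnn _), ← ENNReal.ofReal_mul (hnn _), ← ENNReal.ofReal_mul (hnn _)]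
  rcases le_total b τ with hbt | hbt
  · refine (min_le_left _ _).trans (ENNReal.ofReal_le_ofReal ?_)
    have := hmono ⟨le_rfl, hτ.1⟩ ⟨hb, hbt⟩ hb
    simp only [sub_zero, one_smul, zero_smul, add_zero, mul_zero] at this
    refine this.trans_eq ?_
    congr 2; ring
  · refine (min_le_right _ _).trans (ENNReal.ofReal_le_ofReal ?_)
    have := hanti ⟨hbt, by linarith⟩ ⟨hτ.2, le_rfl⟩ (by linarith : b ≤ 1)
    simp only [sub_self, one_smul, zero_smul, zero_add, mul_one, add_sub_cancel] at this
    refine this.trans_eq ?_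
    congr 2; ring

theorem main_succ {m : ℕ} (f : EuclideanSpace ℝ (Fin (m + 1)) → ℝ)
    (hnn : ∀ x, 0 ≤ f x) (hint : Integrable f) (hQ : Q m (fun x => ENNReal.ofReal (f x)))
    (D : ℝ) (hD : 0 < D)
    (hdiam : ∀ x ∈ Function.support f, ∀ y ∈ Function.support f, dist x y ≤ D)
    (S₁ S₂ S₃ : Set (EuclideanSpace ℝ (Fin (m + 1))))
    (hm₁ : MeasurableSet S₁) (hm₂ : MeasurableSet S₂) (hm₃ : MeasurableSet S₃)
    (hcover : S₁ ∪ S₂ ∪ S₃ = univ)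
    (dd : ℝ) (hsep : ∀ u ∈ S₁, ∀ v ∈ S₂, dd ≤ dist u v) (ρ : ℝ) (hρ : 0 < ρ) (hρd : ρ * D < dd)
    (hA : ∫ x in S₃, f x < ρ * ∫ x in S₁, f x) (hB : ∫ x in S₃, f x < ρ * ∫ x in S₂, f x) :
    False := by
  obtain ⟨z, hz⟩ : ∃ z, f z ≠ 0 := by
    by_contra hcon
    push Not at hcon
    simp [hcon] at hA
  set K₀ := Metric.closedBall z D
  have hsupp : ∀ x, x ∉ K₀ → f x = 0 := by
    intro x hx
    by_contra h
    exact hx (hdiam x h z hz)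
  let g : Set (EuclideanSpace ℝ (Fin (m + 1))) → EuclideanSpace ℝ (Fin (m + 1)) → ℝ := fun S x =>
    ρ * S.indicator f x - S₃.indicator f x
  have hgi : ∀ S, MeasurableSet S → Integrable (g S) := fun S hS =>
    ((hint.indicator hS).const_mul ρ).sub (hint.indicator hm₃)
  have hgK : ∀ S, MeasurableSet S → ∀ K, MeasurableSet K → ∫ x in K, g S x
      = ρ * (∫ x in S ∩ K, f x) - ∫ x in S₃ ∩ K, f x := by
    intro S hS K hK
    simp only [g]
    rw [integral_sub, integral_const_mul, setIntegral_indicator hS, setIntegral_indicator hm₃,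
      inter_comm K, inter_comm K]
    · exact ((hint.indicator hS).const_mul ρ).restrict
    · exact (hint.indicator hm₃).restrict
  have hK₀ : ∀ S, MeasurableSet S → ∫ x in K₀, g S x = ρ * (∫ x in S, f x) - ∫ x in S₃, f x := by
    intro S hS
    rw [setIntegral_eq_integral_of_forall_compl_eq_zero, ← setIntegral_univ,
      hgK S hS univ MeasurableSet.univ, inter_univ, inter_univ]
    intro x hx
    simp [g, indicator, hsupp x hx]
  obtain ⟨x₀, u, i, hu, hthin⟩ := exists_thin (0 : Fin (m + 1)) (g S₁) (g S₂) (hgi _ hm₁)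
    (hgi _ hm₂) K₀ (isCompact_closedBall _ _) (convex_closedBall _ _)
    (by rw [hK₀ _ hm₁]; linarith) (by rw [hK₀ _ hm₂]; linarith)
  set ε := (dd - ρ * D) / (2 * (1 + ρ)) with hε
  have hε0 : 0 < ε := div_pos (by linarith) (by linarith)
  have hεe : dd - 2 * ε = ρ * (D + 2 * ε) := by rw [hε]; field_simp; ring
  obtain ⟨K, hKcomp, hKconv, hK1, hK2, hKthin⟩ := hthin ε hε0
  have hKm := hKcomp.measurableSet
  rw [hgK _ hm₁ _ hKm] at hK1
  rw [hgK _ hm₂ _ hKm] at hK2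
  have hupos : 0 < ‖u‖ := by
    rw [norm_pos_iff]
    rintro rfl
    simp at hu
  have hapx : ∀ x ∈ K, ∀ y ∈ K, |dist x y - |x i - y i| * ‖u‖| ≤ 2 * ε := by
    intro x hx y hy
    have h1 := hKthin x hx
    have h2 := hKthin y hy
    have e : (x - y) - (x i - y i) • u
        = (x - x₀ - (x i - x₀ i) • u) - (y - x₀ - (y i - x₀ i) • u) := by module
    have h3 : ‖(x - y) - (x i - y i) • u‖ ≤ 2 * ε := by
      rw [e]
      refine (norm_sub_le _ _).trans ?_
      linarith
    rw [dist_eq_norm]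
    have h4 := abs_norm_sub_norm_le (x - y) ((x i - y i) • u)
    rw [norm_smul, Real.norm_eq_abs] at h4
    exact h4.trans h3
  set D' := (D + 2 * ε) / ‖u‖ with hD'
  have hD'0 : 0 < D' := by positivity
  have hfin := thin_ineq (fun x => ENNReal.ofReal (f x)) hQ
    hint.aestronglyMeasurable.aemeasurable.ennreal_ofReal K hKm hKconv i (ρ * D') D' S₁ S₂
    (by
      intro x hx y hy
      have h1 := abs_le.1 (hapx x hx.2 y hy.2)
      have h2 := hsep x hx.1 y hy.1
      rw [hD', ← mul_div_assoc, ← hεe, div_le_iff₀ hupos]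
      linarith)
    (by
      intro x hx y hy hfx hfy
      have h1 := abs_le.1 (hapx x hx y hy)
      have h2 := hdiam x (by rintro h; simp [h] at hfx) y (by rintro h; simp [h] at hfy)
      rw [hD', le_div_iff₀ hupos]
      linarith)
  have hS3 : (S₁ ∪ S₂)ᶜ ∩ K ⊆ S₃ ∩ K := by
    rintro x ⟨hx, hxK⟩
    have : x ∈ S₁ ∪ S₂ ∪ S₃ := by rw [hcover]; trivial
    exact ⟨this.resolve_left hx, hxK⟩
  have hfin2 := hfin.trans (mul_le_mul_right (lintegral_mono_set hS3) (ENNReal.ofReal D'))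
  have conv : ∀ S : Set (EuclideanSpace ℝ (Fin (m + 1))),
      ∫⁻ x in S, ENNReal.ofReal (f x) = ENNReal.ofReal (∫ x in S, f x) := fun S =>
    (ofReal_integral_eq_lintegral_ofReal hint.restrict (ae_of_all _ hnn)).symm
  have nn : ∀ S : Set (EuclideanSpace ℝ (Fin (m + 1))), 0 ≤ ∫ x in S, f x := fun S =>
    integral_nonneg hnn
  rw [conv, conv, conv, ← ENNReal.ofReal_min, ← ENNReal.ofReal_mul (by positivity),
    ← ENNReal.ofReal_mul (by positivity),
    ENNReal.ofReal_le_ofReal_iff (mul_nonneg hD'0.le (nn _))] at hfin2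
  have h5 : ρ * min (∫ x in S₁ ∩ K, f x) (∫ x in S₂ ∩ K, f x) ≤ ∫ x in S₃ ∩ K, f x := by
    refine le_of_mul_le_mul_left ?_ hD'0
    linarith
  rcases min_choice (∫ x in S₁ ∩ K, f x) (∫ x in S₂ ∩ K, f x) with h | h <;> rw [h] at h5 <;> linarith

end Iso

theorem isoperimetry_of_linewise_unimodal {n : ℕ}
    (f : EuclideanSpace ℝ (Fin n) → ℝ)
    (hnn : ∀ x, 0 ≤ f x) (hint : Integrable f)
    (D : ℝ) (hD : 0 < D)
    (hdiam : ∀ x ∈ Function.support f, ∀ y ∈ Function.support f, dist x y ≤ D)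
    (huni : ∀ a b : EuclideanSpace ℝ (Fin n), ∀ c d : ℝ,
      (∀ t ∈ Icc (0:ℝ) 1, 0 ≤ c + d * t) →
      ∃ tmax ∈ Icc (0:ℝ) 1,
        MonotoneOn (fun t => f ((1 - t) • a + t • b) * (c + d * t) ^ (n - 1))
          (Icc 0 tmax) ∧
        AntitoneOn (fun t => f ((1 - t) • a + t • b) * (c + d * t) ^ (n - 1))
          (Icc tmax 1))
    (S₁ S₂ S₃ : Set (EuclideanSpace ℝ (Fin n)))
    (hm₁ : MeasurableSet S₁) (hm₂ : MeasurableSet S₂) (hm₃ : MeasurableSet S₃)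
    (hcover : S₁ ∪ S₂ ∪ S₃ = univ)
    (hd₁₂ : Disjoint S₁ S₂) (hd₁₃ : Disjoint S₁ S₃) (hd₂₃ : Disjoint S₂ S₃)
    (dd : ℝ) (hdd : 0 ≤ dd) (hsep : ∀ u ∈ S₁, ∀ v ∈ S₂, dd ≤ dist u v) :
    (dd / D) * min ((∫ x in S₁, f x) / ∫ x, f x) ((∫ x in S₂, f x) / ∫ x, f x) ≤
      (∫ x in S₃, f x) / ∫ x, f x := by
  have hI : 0 ≤ ∫ x, f x := integral_nonneg hnn
  have nn : ∀ S : Set (EuclideanSpace ℝ (Fin n)), 0 ≤ ∫ x in S, f x := fun S =>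
    integral_nonneg hnn
  rw [min_div_div_right hI, ← mul_div_assoc]
  refine div_le_div_of_nonneg_right ?_ hI
  by_contra hcon
  push Not at hcon
  set M := min (∫ x in S₁, f x) (∫ x in S₂, f x) with hM
  have hMnn : 0 ≤ M := le_min (nn _) (nn _)
  have hMpos : 0 < M := by
    rcases hMnn.eq_or_lt with h | h
    · rw [← h, mul_zero] at hcon
      exact absurd hcon (not_lt.2 (nn _))
    · exact h
  obtain ⟨ρ, hρ1, hρ2⟩ := exists_between ((div_lt_iff₀ hMpos).2 hcon)
  have hρ0 : 0 < ρ := lt_of_le_of_lt (div_nonneg (nn _) hMnn) hρ1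
  rw [div_lt_iff₀ hMpos] at hρ1
  rw [lt_div_iff₀ hD] at hρ2
  have hA : ∫ x in S₃, f x < ρ * ∫ x in S₁, f x :=
    hρ1.trans_le (mul_le_mul_of_nonneg_left (min_le_left _ _) hρ0.le)
  have hB : ∫ x in S₃, f x < ρ * ∫ x in S₂, f x :=
    hρ1.trans_le (mul_le_mul_of_nonneg_left (min_le_right _ _) hρ0.le)
  rcases n with _ | m
  · have ne : ∀ S : Set (EuclideanSpace ℝ (Fin 0)), ∫ x in S₃, f x < ρ * ∫ x in S, f x →
        S.Nonempty := by
      intro S h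
      by_contra hc
      rw [not_nonempty_iff_eq_empty] at hc
      rw [hc] at h
      simp only [Measure.restrict_empty, integral_zero_measure, mul_zero] at h
      exact absurd h (not_lt.2 (nn _))
    obtain ⟨x, hx⟩ := ne _ hA
    obtain ⟨y, hy⟩ := ne _ hB
    have : x = y := Subsingleton.elim _ _
    subst this
    exact disjoint_left.1 hd₁₂ hx hy
  · exact Iso.main_succ f hnn hint (Iso.Q_of_uni f hnn huni) D hD hdiam S₁ S₂ S₃ hm₁ hm₂ hm₃ hcover
      dd hsep ρ hρ0 hρ2 hA hB
end

section
/- Let n ≥ 2 and let f : ℝⁿ → ℝ≥0 be (1/(n-1))-harmonic-concave with convex support K of diameter D. Then for any measurable partition ℝⁿ = S₁ ∪ S₂ ∪ S₃, π_f(S₃) ≥ (d(S₁,S₂)/D) · min{π_f(S₁), π_f(S₂)}. -/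
open Set MeasureTheory
section helpers
open scoped ENNReal NNReal

lemma bm_compact {A B : Set ℝ} (hA : IsCompact A) (hB : IsCompact B) (hA' : A.Nonempty)
    (hB' : B.Nonempty) {W : Set ℝ} (hW : ∀ x ∈ A, ∀ y ∈ B, x + y ∈ W) :
    volume A + volume B ≤ volume W := by
  obtain ⟨a, haA, ha⟩ := hA.exists_isGreatest hA'
  obtain ⟨b, hbB, hb⟩ := hB.exists_isLeast hB'
  have e1 : volume ((fun x => x + b) '' A) = volume A := by simp
  have e2 : volume ((fun x => a + x) '' B) = volume B := by simp
  have hint : volume (((fun x => x + b) '' A) ∩ ((fun x => a + x) '' B)) = 0 := by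
    refine measure_mono_null (t := {a + b}) ?_ (by simp)
    rintro _ ⟨⟨x, hx, rfl⟩, ⟨y, hy, hxy⟩⟩
    have := ha hx
    have := hb hy
    simp only [mem_singleton_iff] at *
    linarith
  have hm : MeasurableSet ((fun x => a + x) '' B) :=
    (hB.image (by fun_prop)).measurableSet
  have := measure_union_add_inter (μ := volume) ((fun x => x + b) '' A) hm
  rw [hint, add_zero, e1, e2] at this
  rw [← this]
  apply measure_mono
  rintro _ (⟨x, hx, rfl⟩ | ⟨y, hy, rfl⟩)
  · exact hW _ hx _ hbB
  · exact hW _ haA _ hy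

lemma bm_meas {A B : Set ℝ} (hA : MeasurableSet A) (hB : MeasurableSet B) (hA' : A.Nonempty)
    (hB' : B.Nonempty) {W : Set ℝ} (hW : ∀ x ∈ A, ∀ y ∈ B, x + y ∈ W) :
    volume A + volume B ≤ volume W := by
  obtain ⟨a, ha⟩ := hA'
  obtain ⟨b, hb⟩ := hB'
  rw [hA.measure_eq_iSup_isCompact, hB.measure_eq_iSup_isCompact]
  simp only [iSup_and']
  have key : ∀ i, (i ⊆ A ∧ IsCompact i) → ∀ j, (j ⊆ B ∧ IsCompact j) →
      volume i + volume j ≤ volume W := by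
    intro K hK L hL
    calc volume K + volume L ≤ volume (insert a K) + volume (insert b L) := by
          gcongr <;> exact subset_insert _ _
      _ ≤ _ := bm_compact (hK.2.insert a) (hL.2.insert b) ⟨a, by simp⟩ ⟨b, by simp⟩ (by
          intro x hx y hy
          refine hW x ?_ y ?_
          · rcases hx with rfl | hx
            · exact ha
            · exact hK.1 hx
          · rcases hy with rfl | hy
            · exact hb
            · exact hL.1 hy)
  exact ENNReal.biSup_add_biSup_le' ⟨∅, by simp⟩ ⟨∅, by simp⟩ key

lemma bm_smul {A B : Set ℝ} (hA : MeasurableSet A) (hB : MeasurableSet B) (hA' : A.Nonempty)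
    (hB' : B.Nonempty) {W : Set ℝ} {s t : ℝ} (hs : 0 < s) (ht : 0 < t)
    (hW : ∀ x ∈ A, ∀ y ∈ B, s * x + t * y ∈ W) :
    ENNReal.ofReal s * volume A + ENNReal.ofReal t * volume B ≤ volume W := by
  have e : ∀ (r : ℝ) (S : Set ℝ), 0 < r → ENNReal.ofReal r * volume S = volume ((r • ·) '' S) := by
    intro r S hr
    have := Measure.addHaar_smul (volume : Measure ℝ) r S
    simp only [Module.finrank_self, pow_one, abs_of_pos hr] at this
    rw [← this]; rfl
  rw [e s A hs, e t B ht]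
  apply bm_meas
  · exact hA.const_smul₀ s
  · exact hB.const_smul₀ t
  · exact hA'.image _
  · exact hB'.image _
  · rintro _ ⟨x, hx, rfl⟩ _ ⟨y, hy, rfl⟩
    exact hW x hx y hy


lemma layer_one {u : ℝ → ℝ≥0∞} (hu : Measurable u) (h1 : ∀ x, u x ≤ 1) :
    ∫⁻ x, u x = ∫⁻ r in Ioi (0:ℝ), volume {x | ENNReal.ofReal r < u x} := by
  have hfin : ∀ x, u x ≠ ∞ := fun x => ne_top_of_le_ne_top (by simp) (h1 x)
  have := lintegral_eq_lintegral_meas_lt (volume : Measure ℝ) (f := fun x => (u x).toReal)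
    (Filter.Eventually.of_forall fun x => ENNReal.toReal_nonneg) hu.ennreal_toReal.aemeasurable
  simp only [ENNReal.ofReal_toReal (hfin _)] at this
  rw [this]
  apply setLIntegral_congr_fun measurableSet_Ioi
  intro r hr
  simp only
  congr 1
  ext x
  simp only [mem_ofPred_eq]
  rw [ENNReal.ofReal_lt_iff_lt_toReal (le_of_lt hr) (hfin x)]

lemma bm_fun {u v w : ℝ → ℝ≥0∞} (hu : Measurable u) (hv : Measurable v) (hw : Measurable w)
    (hu1 : ∀ x, u x ≤ 1) (hv1 : ∀ x, v x ≤ 1) (hus : ∀ r < 1, ∃ x, r < u x)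
    (hvs : ∀ r < 1, ∃ x, r < v x) {s t : ℝ≥0} (hs : 0 < s) (ht : 0 < t)
    (h : ∀ x y, min (u x) (v y) ≤ w (s * x + t * y)) :
    s * (∫⁻ x, u x) + t * (∫⁻ x, v x) ≤ ∫⁻ x, w x := by
  have hw' : ∫⁻ x, min (w x) 1 ≤ ∫⁻ x, w x := lintegral_mono fun x => min_le_left _ _
  refine le_trans ?_ hw'
  rw [layer_one hu hu1, layer_one hv hv1, layer_one (hw.min measurable_const) (fun x => min_le_right _ _),
    ← lintegral_const_mul' _ _ (by simp), ← lintegral_const_mul' _ _ (by simp)]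
  refine le_trans (le_lintegral_add _ _) ?_
  apply setLIntegral_mono_ae' measurableSet_Ioi
  refine Filter.Eventually.of_forall fun r hr => ?_
  by_cases hr1 : 1 ≤ r
  · have e1 : {x | ENNReal.ofReal r < u x} = ∅ := by
      ext x
      simp only [mem_ofPred_eq, mem_empty_iff_false, iff_false, not_lt]
      exact (hu1 x).trans (by simpa using hr1)
    have e2 : {x | ENNReal.ofReal r < v x} = ∅ := by
      ext x
      simp only [mem_ofPred_eq, mem_empty_iff_false, iff_false, not_lt]
      exact (hv1 x).trans (by simpa using hr1)
    simp [e1, e2]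
  · have hr2 : ENNReal.ofReal r < 1 := by simpa using hr1
    have := bm_smul (A := {x | ENNReal.ofReal r < u x}) (B := {x | ENNReal.ofReal r < v x})
      (W := {x | ENNReal.ofReal r < min (w x) 1}) (s := s) (t := t)
      (measurableSet_lt measurable_const hu) (measurableSet_lt measurable_const hv)
      (hus _ hr2) (hvs _ hr2) (by exact_mod_cast hs) (by exact_mod_cast ht)
      (by
        intro x hx y hy
        simp only [mem_ofPred_eq] at *
        exact lt_min (lt_of_lt_of_le (lt_min hx hy) (h x y)) hr2)
    simpa using this

/-- harmonic mean condition -/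
def HM (k : ℕ) (s t : ℝ≥0) (a b w : ℝ≥0∞) : Prop :=
  ∀ c p q : ℝ≥0, 0 < p → 0 < q → (c : ℝ≥0∞) ≤ a * (p : ℝ≥0∞) ^ k → (c : ℝ≥0∞) ≤ b * (q : ℝ≥0∞) ^ k →
    (c : ℝ≥0∞) ≤ w * ((s * p + t * q : ℝ≥0) : ℝ≥0∞) ^ k

lemma radon_one (k : ℕ) {x p X P : ℝ} (hx : 0 < x) (hp : 0 < p) (hX : 0 < X) (hP : 0 < P) :
    (k + 1) * (X / P) ^ k * x - k * (X / P) ^ (k + 1) * p ≤ x ^ (k + 1) / p ^ k := by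
  have hr0 : 0 < X / P := by positivity
  generalize X / P = r at *
  -- Bernoulli at y = x / (p r)
  have hb := one_add_mul_le_pow (a := x / (p * r) - 1) (by
    have : 0 < x / (p * r) := by positivity
    linarith) (k + 1)
  have e : 1 + (x / (p * r) - 1) = x / (p * r) := by ring
  rw [e] at hb
  have hm := mul_le_mul_of_nonneg_left hb (by positivity : 0 ≤ p * r ^ (k + 1))
  have e2 : p * r ^ (k + 1) * (x / (p * r)) ^ (k + 1) = x ^ (k + 1) / p ^ k := by
    rw [div_pow, mul_pow, pow_succ p k]
    field_simp
  rw [e2] at hm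
  refine le_trans (le_of_eq ?_) hm
  push_cast
  field_simp
  ring

lemma radon (k : ℕ) {s t α β p q : ℝ≥0} (hs : 0 < s) (ht : 0 < t) (hα : 0 < α) (hβ : 0 < β)
    (hp : 0 < p) (hq : 0 < q) :
    (s * α + t * β) ^ (k + 1) / (s * p + t * q) ^ k ≤
      s * (α ^ (k + 1) / p ^ k) + t * (β ^ (k + 1) / q ^ k) := by
  rw [← NNReal.coe_le_coe]
  push_cast
  have hs' : (0:ℝ) < s := hs
  have ht' : (0:ℝ) < t := ht
  have hα' : (0:ℝ) < α := hα
  have hβ' : (0:ℝ) < β := hβ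
  have hp' : (0:ℝ) < p := hp
  have hq' : (0:ℝ) < q := hq
  have hX : (0:ℝ) < s * α + t * β := by positivity
  have hP : (0:ℝ) < s * p + t * q := by positivity
  have h1 := mul_le_mul_of_nonneg_left (radon_one k hα' hp' hX hP) hs'.le
  have h2 := mul_le_mul_of_nonneg_left (radon_one k hβ' hq' hX hP) ht'.le
  refine le_trans (le_of_eq ?_) (add_le_add h1 h2)
  generalize hXX : (s:ℝ) * α + t * β = X at *
  generalize hPP : (s:ℝ) * p + t * q = P at *
  have : (s:ℝ) * ((k + 1) * (X / P) ^ k * α - k * (X / P) ^ (k + 1) * p) +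
      t * ((k + 1) * (X / P) ^ k * β - k * (X / P) ^ (k + 1) * q) =
      (k + 1) * (X / P) ^ k * (s * α + t * β) - k * (X / P) ^ (k + 1) * (s * p + t * q) := by ring
  rw [this, hXX, hPP, div_pow, div_pow, pow_succ P k, pow_succ X k]
  field_simp
  ring


lemma HM.bounded {k : ℕ} {s t : ℝ≥0} (hs : 0 < s) (ht : 0 < t) {u v w : ℝ → ℝ≥0∞}
    (hu : Measurable u) (hv : Measurable v) (hw : Measurable w) {N : ℝ≥0∞} (hN : N ≠ ∞)
    (huN : ∀ x, u x ≤ N) (hvN : ∀ x, v x ≤ N)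
    (h : ∀ x y, HM (k + 1) s t (u x) (v y) (w (s * x + t * y))) :
    HM k s t (∫⁻ x, u x) (∫⁻ x, v x) (∫⁻ x, w x) := by
  intro c p q hp hq hcu hcv
  rcases eq_or_ne c 0 with rfl | hc
  · simp
  have root : ∀ (u : ℝ → ℝ≥0∞) (p : ℝ≥0), (∀ x, u x ≤ N) →
      (c : ℝ≥0∞) ≤ (∫⁻ x, u x) * (p : ℝ≥0∞) ^ k →
      ∃ α : ℝ≥0, 0 < α ∧ (∀ x, u x * (α : ℝ≥0∞) ^ (k + 1) ≤ 1) ∧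
        ∀ r < 1, ∃ x, r < u x * (α : ℝ≥0∞) ^ (k + 1) := by
    intro u p huN hcu
    have ha : (⨆ x, u x) ≠ ∞ := ne_top_of_le_ne_top hN (iSup_le huN)
    have ha0 : (⨆ x, u x) ≠ 0 := by
      intro h0
      have : ∀ x, u x = 0 := by simpa using h0
      simp [this, hc] at hcu
    obtain ⟨a, haa⟩ : ∃ a : ℝ≥0, (a : ℝ≥0∞) = ⨆ x, u x := ⟨_, ENNReal.coe_toNNReal ha⟩
    have hapos : 0 < a := by
      rw [pos_iff_ne_zero]; rintro rfl; exact ha0 (by simp [← haa])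
    have hpow : a * ((a⁻¹) ^ ((k + 1 : ℕ) : ℝ)⁻¹) ^ (k + 1) = 1 := by
      rw [NNReal.rpow_inv_natCast_pow _ (by simp)]
      exact mul_inv_cancel₀ hapos.ne'
    have hsup : (⨆ x, u x * (((a⁻¹) ^ ((k + 1 : ℕ) : ℝ)⁻¹ : ℝ≥0) : ℝ≥0∞) ^ (k + 1)) = 1 := by
      rw [← ENNReal.iSup_mul, ← haa]
      exact_mod_cast hpow
    refine ⟨(a⁻¹) ^ ((k + 1 : ℕ) : ℝ)⁻¹, ?_, ?_, ?_⟩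
    · exact NNReal.rpow_pos (inv_pos.2 hapos)
    · intro x
      rw [← hsup]
      exact le_iSup (fun x => u x * (((a⁻¹) ^ ((k + 1 : ℕ) : ℝ)⁻¹ : ℝ≥0) : ℝ≥0∞) ^ (k + 1)) x
    · intro r hr
      rw [← hsup] at hr
      exact lt_iSup_iff.1 hr
  obtain ⟨α, hα, hα1, hαs⟩ := root u p huN hcu
  obtain ⟨β, hβ, hβ1, hβs⟩ := root v q hvN hcv
  set X : ℝ≥0 := s * α + t * β with hX
  set P : ℝ≥0 := s * p + t * q with hP
  have hX0 : 0 < X := by positivity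
  have hP0 : 0 < P := by positivity
  have key := bm_fun (u := fun x => u x * (α : ℝ≥0∞) ^ (k + 1))
    (v := fun x => v x * (β : ℝ≥0∞) ^ (k + 1)) (w := fun x => w x * (X : ℝ≥0∞) ^ (k + 1))
    (hu.mul_const _) (hv.mul_const _) (hw.mul_const _) hα1 hβ1 hαs hβs hs ht (by
      intro x y
      have hfin : min (u x * (α : ℝ≥0∞) ^ (k + 1)) (v y * (β : ℝ≥0∞) ^ (k + 1)) ≠ ∞ :=
        ne_top_of_le_ne_top (by simp) ((min_le_left _ _).trans (hα1 x))
      obtain ⟨d, hd⟩ : ∃ d : ℝ≥0, (d : ℝ≥0∞) = _ := ⟨_, ENNReal.coe_toNNReal hfin⟩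
      have := h x y d α β hα hβ (hd.le.trans (min_le_left _ _)) (hd.le.trans (min_le_right _ _))
      rw [hd] at this
      exact this)
  rw [lintegral_mul_const _ hu, lintegral_mul_const _ hv, lintegral_mul_const _ hw] at key
  generalize (∫⁻ x, u x) = U at *
  generalize (∫⁻ x, v x) = V at *
  generalize (∫⁻ x, w x) = W at *
  have lb : ∀ (U : ℝ≥0∞) (p α : ℝ≥0), 0 < p → (c : ℝ≥0∞) ≤ U * (p : ℝ≥0∞) ^ k →
      ((c * (α ^ (k + 1) / p ^ k) : ℝ≥0) : ℝ≥0∞) ≤ U * (α : ℝ≥0∞) ^ (k + 1) := by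
    intro U p α hp hU
    have hp' : (p ^ k : ℝ≥0) ≠ 0 := by positivity
    have e : c * (α ^ (k + 1) / p ^ k) = c * (p ^ k)⁻¹ * α ^ (k + 1) := by
      rw [div_eq_mul_inv]; ring
    rw [e, ENNReal.coe_mul, ENNReal.coe_mul, ENNReal.coe_inv hp']
    push_cast
    gcongr
    rw [← div_eq_mul_inv]
    exact ENNReal.div_le_of_le_mul hU
  have l1 := lb U p α hp hcu
  have l2 := lb V q β hq hcv
  have hr := mul_le_mul_right (radon k hs ht hα hβ hp hq) c
  have hr' : ((c * (X ^ (k + 1) / P ^ k) : ℝ≥0) : ℝ≥0∞) ≤ W * (X : ℝ≥0∞) ^ (k + 1) := by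
    refine le_trans ?_ key
    refine le_trans (ENNReal.coe_le_coe.2 hr) ?_
    have e : c * (s * (α ^ (k + 1) / p ^ k) + t * (β ^ (k + 1) / q ^ k)) =
      s * (c * (α ^ (k + 1) / p ^ k)) + t * (c * (β ^ (k + 1) / q ^ k)) := by ring
    rw [e, ENNReal.coe_add, ENNReal.coe_mul s, ENNReal.coe_mul t]
    exact add_le_add (mul_le_mul_right l1 _) (mul_le_mul_right l2 _)
  have e : c * (X ^ (k + 1) / P ^ k) = c * (P ^ k)⁻¹ * X ^ (k + 1) := by
    rw [div_eq_mul_inv]; ring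
  have hP' : (P ^ k : ℝ≥0) ≠ 0 := by positivity
  rw [e, ENNReal.coe_mul, ENNReal.coe_pow] at hr'
  have hXX : (X : ℝ≥0∞) ^ (k + 1) ≠ 0 := by
    have : (X : ℝ≥0∞) ≠ 0 := by exact_mod_cast hX0.ne'
    exact pow_ne_zero _ this
  have hr2 := (ENNReal.mul_le_mul_iff_left hXX (by finiteness)).1 hr'
  rw [ENNReal.coe_mul, ENNReal.coe_inv hP', ← div_eq_mul_inv] at hr2
  have := (ENNReal.div_le_iff_le_mul (Or.inl (by exact_mod_cast hP')) (Or.inl (by finiteness))).1 hr2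
  simpa using this

lemma HM.mono {k : ℕ} {s t : ℝ≥0} {a b a' b' w : ℝ≥0∞} (h : HM k s t a b w) (ha : a' ≤ a)
    (hb : b' ≤ b) : HM k s t a' b' w := by
  intro c p q hp hq h1 h2
  exact h c p q hp hq (h1.trans (by gcongr)) (h2.trans (by gcongr))

lemma HM.one_dim {k : ℕ} {s t : ℝ≥0} (hs : 0 < s) (ht : 0 < t) {u v w : ℝ → ℝ≥0∞}
    (hu : Measurable u) (hv : Measurable v) (hw : Measurable w)
    (h : ∀ x y, HM (k + 1) s t (u x) (v y) (w (s * x + t * y))) :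
    HM k s t (∫⁻ x, u x) (∫⁻ x, v x) (∫⁻ x, w x) := by
  have trunc : ∀ (u : ℝ → ℝ≥0∞), Measurable u →
      ∫⁻ x, u x = ⨆ N : ℕ, ∫⁻ x, min (u x) N := by
    intro u hu
    rw [← lintegral_iSup]
    · congr 1
      ext x
      rw [← inf_iSup_eq, ENNReal.iSup_natCast]
      simp
    · intro N
      exact hu.min measurable_const
    · intro N M hNM x
      simp only
      gcongr
  intro c p q hp hq hcu hcv
  apply ENNReal.le_of_forall_nnreal_lt
  intro r hr
  have ex : ∀ (u : ℝ → ℝ≥0∞) (p : ℝ≥0), Measurable u →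
      (c : ℝ≥0∞) ≤ (∫⁻ x, u x) * (p : ℝ≥0∞) ^ k →
      ∃ N : ℕ, (r : ℝ≥0∞) < (∫⁻ x, min (u x) N) * (p : ℝ≥0∞) ^ k := by
    intro u p hu hcu
    rw [trunc u hu, ENNReal.iSup_mul] at hcu
    exact lt_iSup_iff.1 (hr.trans_le hcu)
  obtain ⟨N1, h1⟩ := ex u p hu hcu
  obtain ⟨N2, h2⟩ := ex v q hv hcv
  have := HM.bounded (k := k) hs ht (u := fun x => min (u x) (max N1 N2 : ℕ))
    (v := fun x => min (v x) (max N1 N2 : ℕ)) (w := w) (hu.min measurable_const)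
    (hv.min measurable_const) hw (N := (max N1 N2 : ℕ)) (by simp) (fun x => min_le_right _ _)
    (fun x => min_le_right _ _) (fun x y => (h x y).mono (min_le_left _ _) (min_le_left _ _))
  refine this r p q hp hq (h1.le.trans ?_) (h2.le.trans ?_)
  · gcongr
    exact le_max_left _ _
  · gcongr
    exact le_max_right _ _

lemma lintegral_cons {m : ℕ} {u : (Fin (m + 1) → ℝ) → ℝ≥0∞} (hu : Measurable u) :
    ∫⁻ x, u x = ∫⁻ y : Fin m → ℝ, ∫⁻ r : ℝ, u (Fin.cons r y) := by
  have hmp := (volume_preserving_piFinSuccAbove (fun _ : Fin (m + 1) => ℝ) 0).symm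
  rw [← hmp.lintegral_comp hu]
  rw [Measure.volume_eq_prod]
  have hm : Measurable (fun a : ℝ × (Fin m → ℝ) =>
      u ((MeasurableEquiv.piFinSuccAbove (fun _ : Fin (m + 1) => ℝ) 0).symm a)) :=
    hu.comp (MeasurableEquiv.measurable _)
  refine (lintegral_prod_symm' (μ := volume) (ν := volume) _ hm).trans ?_
  simp [MeasurableEquiv.piFinSuccAbove]
  rfl

lemma measurable_cons {m : ℕ} :
    Measurable (fun z : (Fin m → ℝ) × ℝ => (Fin.cons z.2 z.1 : Fin (m + 1) → ℝ)) := by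
  rw [measurable_pi_iff]
  intro i
  refine Fin.cases ?_ (fun j => ?_) i
  · simpa using measurable_snd
  · simp only [Fin.cons_succ]
    exact (measurable_pi_apply j).comp measurable_fst

lemma HM.multi {s t : ℝ≥0} (hs : 0 < s) (ht : 0 < t) (m : ℕ) : ∀ (k : ℕ)
    {u v w : (Fin m → ℝ) → ℝ≥0∞}, Measurable u → Measurable v → Measurable w →
    (∀ x y, HM (m + k) s t (u x) (v y) (w ((s:ℝ) • x + (t:ℝ) • y))) →
    HM k s t (∫⁻ x, u x) (∫⁻ x, v x) (∫⁻ x, w x) := by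
  induction m with
  | zero =>
    intro k u v w hu hv hw h
    have := h 0 0
    simp only [zero_add] at this
    simp only [volume_pi, Measure.pi_of_empty _ (0 : Fin 0 → ℝ), lintegral_dirac]
    convert this using 2
  | succ m ih =>
    intro k u v w hu hv hw h
    rw [lintegral_cons hu, lintegral_cons hv, lintegral_cons hw]
    apply ih k
    · exact (hu.comp measurable_cons).lintegral_prod_right'
    · exact (hv.comp measurable_cons).lintegral_prod_right'
    · exact (hw.comp measurable_cons).lintegral_prod_right'
    · intro x y
      have hc : ∀ x : Fin m → ℝ, Measurable (fun r : ℝ => (Fin.cons r x : Fin (m + 1) → ℝ)) := by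
        intro x
        exact measurable_cons.comp measurable_prodMk_left
      apply HM.one_dim hs ht (hu.comp (hc x)) (hv.comp (hc y)) (hw.comp (hc _))
      intro a b
      have := h (Fin.cons a x) (Fin.cons b y)
      have e : (s:ℝ) • (Fin.cons a x : Fin (m + 1) → ℝ) + (t:ℝ) • (Fin.cons b y : Fin (m + 1) → ℝ) =
          Fin.cons (s * a + t * b) ((s:ℝ) • x + (t:ℝ) • y) := by
        ext i
        refine Fin.cases ?_ (fun j => ?_) i <;> simp
      rw [e, show m + 1 + k = m + k + 1 by ring] at this
      exact this


lemma layer_gen {ν : Measure ℝ} {A : ℝ → ℝ≥0∞} (hA : Measurable A)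
    (hfin : ∀ᵐ x ∂ν, A x < ∞) :
    ∫⁻ x, A x ∂ν = ∫⁻ r in Ioi (0:ℝ), ν {x | (Real.toNNReal r : ℝ≥0∞) < A x} := by
  have := lintegral_eq_lintegral_meas_lt ν (f := fun x => (A x).toReal)
    (Filter.Eventually.of_forall fun x => ENNReal.toReal_nonneg) hA.ennreal_toReal.aemeasurable
  have e : ∫⁻ x, A x ∂ν = ∫⁻ x, ENNReal.ofReal (A x).toReal ∂ν := by
    apply lintegral_congr_ae
    filter_upwards [hfin] with x hx
    rw [ENNReal.ofReal_toReal hx.ne]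
  rw [e, this]
  apply setLIntegral_congr_fun measurableSet_Ioi
  intro r hr
  apply measure_congr
  filter_upwards [hfin] with x hx
  apply propext
  exact (ENNReal.ofReal_lt_iff_lt_toReal (le_of_lt hr) hx.ne).symm

lemma gap_meas {Q₁ Q₂ I : Set ℝ} (h1 : IsClosed Q₁) (h2 : IsClosed Q₂) (hI : I.OrdConnected)
    {δ : ℝ} (hsep : ∀ x ∈ Q₁, ∀ y ∈ Q₂, δ ≤ |x - y|) {a b : ℝ} (ha : a ∈ Q₁ ∩ I)
    (hb : b ∈ Q₂ ∩ I) (hab : a ≤ b) : ENNReal.ofReal δ ≤ volume ((Q₁ ∪ Q₂)ᶜ ∩ I) := by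
  have hc1 : IsCompact (Q₁ ∩ Icc a b) := isCompact_Icc.inter_left h1
  obtain ⟨x, ⟨hxQ, hxI⟩, hx⟩ := hc1.exists_isGreatest ⟨a, ha.1, ⟨le_rfl, hab⟩⟩
  have hc2 : IsCompact (Q₂ ∩ Icc x b) := isCompact_Icc.inter_left h2
  obtain ⟨y, ⟨hyQ, hyI⟩, hy⟩ := hc2.exists_isLeast ⟨b, hb.1, ⟨hxI.2, le_rfl⟩⟩
  have hd := hsep x hxQ y hyQ
  rw [abs_sub_comm, abs_of_nonneg (by linarith [hyI.1])] at hd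
  calc ENNReal.ofReal δ ≤ ENNReal.ofReal (y - x) := ENNReal.ofReal_le_ofReal hd
    _ = volume (Ioo x y) := by simp
    _ ≤ _ := by
      apply measure_mono
      intro z hz
      refine ⟨?_, hI.out ha.2 hb.2 ⟨hxI.1.trans hz.1.le, hz.2.le.trans hyI.2⟩⟩
      rintro (hz1 | hz2)
      · have := hx ⟨hz1, hxI.1.trans hz.1.le, hz.2.le.trans hyI.2⟩
        linarith [hz.1]
      · have := hy ⟨hz2, hz.1.le, hz.2.le.trans hyI.2⟩
        linarith [hz.2]

lemma gap_meas' {Q₁ Q₂ I : Set ℝ} (h1 : IsClosed Q₁) (h2 : IsClosed Q₂) (hI : I.OrdConnected)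
    {δ : ℝ} (hsep : ∀ x ∈ Q₁, ∀ y ∈ Q₂, δ ≤ |x - y|) (ha : (Q₁ ∩ I).Nonempty)
    (hb : (Q₂ ∩ I).Nonempty) : ENNReal.ofReal δ ≤ volume ((Q₁ ∪ Q₂)ᶜ ∩ I) := by
  obtain ⟨a, ha⟩ := ha
  obtain ⟨b, hb⟩ := hb
  rcases le_total a b with hab | hab
  · exact gap_meas h1 h2 hI hsep ha hb hab
  · rw [union_comm]
    exact gap_meas h2 h1 hI (fun x hx y hy => by rw [abs_sub_comm]; exact hsep y hy x hx) hb ha hab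

lemma vol_le_diam {I : Set ℝ} {D : ℝ} (hI : ∀ x ∈ I, ∀ y ∈ I, |x - y| ≤ D) :
    volume I ≤ ENNReal.ofReal D := by
  refine (Real.volume_le_diam I).trans ?_
  apply Metric.ediam_le
  intro x hx y hy
  rw [edist_dist]
  exact ENNReal.ofReal_le_ofReal (hI x hx y hy)

lemma one_dim_half {A : ℝ → ℝ≥0∞} (hA : Measurable A)
    (hq : ∀ r : ℝ≥0, {x | (r : ℝ≥0∞) < A x}.OrdConnected)
    (hfin : ∀ᵐ x, A x < ∞) {D δ : ℝ} 
    (hD : ∀ x y, A x ≠ 0 → A y ≠ 0 → |x - y| ≤ D) {Q₁ Q₂ : Set ℝ} (h1 : IsClosed Q₁)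
    (h2 : IsClosed Q₂) (hsep : ∀ x ∈ Q₁, ∀ y ∈ Q₂, δ ≤ |x - y|)
    (hh : ∀ r : ℝ≥0, (Q₁ ∩ {x | (r : ℝ≥0∞) < A x}).Nonempty →
      (Q₂ ∩ {x | (r : ℝ≥0∞) < A x}).Nonempty) :
    ENNReal.ofReal δ * ∫⁻ x in Q₁, A x ≤ ENNReal.ofReal D * ∫⁻ x in (Q₁ ∪ Q₂)ᶜ, A x := by
  rw [layer_gen hA (ae_restrict_of_ae hfin), layer_gen hA (ae_restrict_of_ae hfin), ← lintegral_const_mul' _ _ (by simp),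
    ← lintegral_const_mul' _ _ (by simp)]
  apply lintegral_mono
  intro r
  simp only
  generalize Real.toNNReal r = r
  have hm : MeasurableSet {x | (r : ℝ≥0∞) < A x} := measurableSet_lt measurable_const hA
  rw [Measure.restrict_apply hm, Measure.restrict_apply hm]
  rcases (Q₁ ∩ {x | (r : ℝ≥0∞) < A x}).eq_empty_or_nonempty with he | hne
  · rw [inter_comm, he]; simp
  · have g := gap_meas' h1 h2 (hq r) hsep hne (hh r hne)
    have l : volume ({x | (r : ℝ≥0∞) < A x} ∩ Q₁) ≤ ENNReal.ofReal D := by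
      apply vol_le_diam
      intro x hx y hy
      exact hD x y (ne_bot_of_gt hx.1) (ne_bot_of_gt hy.1)
    rw [inter_comm _ (Q₁ ∪ Q₂)ᶜ, mul_comm]
    gcongr

lemma one_dim_iso {A : ℝ → ℝ≥0∞} (hA : Measurable A)
    (hq : ∀ r : ℝ≥0, {x | (r : ℝ≥0∞) < A x}.OrdConnected)
    (hfin : ∀ᵐ x, A x < ∞) {D δ : ℝ} 
    (hD : ∀ x y, A x ≠ 0 → A y ≠ 0 → |x - y| ≤ D) {Q₁ Q₂ : Set ℝ} (h1 : IsClosed Q₁)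
    (h2 : IsClosed Q₂) (hsep : ∀ x ∈ Q₁, ∀ y ∈ Q₂, δ ≤ |x - y|) :
    ENNReal.ofReal δ * (∫⁻ x in Q₁, A x) ≤ ENNReal.ofReal D * ∫⁻ x in (Q₁ ∪ Q₂)ᶜ, A x ∨
    ENNReal.ofReal δ * (∫⁻ x in Q₂, A x) ≤ ENNReal.ofReal D * ∫⁻ x in (Q₁ ∪ Q₂)ᶜ, A x := by
  by_cases hh : ∀ r : ℝ≥0, (Q₁ ∩ {x | (r : ℝ≥0∞) < A x}).Nonempty →
      (Q₂ ∩ {x | (r : ℝ≥0∞) < A x}).Nonempty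
  · exact Or.inl (one_dim_half hA hq hfin hD h1 h2 hsep hh)
  · right
    rw [union_comm]
    refine one_dim_half hA hq hfin hD h2 h1
      (fun x hx y hy => by rw [abs_sub_comm]; exact hsep y hy x hx) ?_
    push Not at hh
    obtain ⟨r, ⟨x, hx1, hx2⟩, hr⟩ := hh
    rintro r' ⟨y, hy1, hy2⟩
    refine ⟨x, hx1, ?_⟩
    rcases le_total r r' with hle | hle
    · exfalso
      have : y ∈ Q₂ ∩ {x | (r : ℝ≥0∞) < A x} :=
        ⟨hy1, lt_of_le_of_lt (ENNReal.coe_le_coe.2 hle) hy2⟩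
      rw [hr] at this
      exact this
    · exact lt_of_le_of_lt (ENNReal.coe_le_coe.2 hle) hx2


lemma exists_coord {m : ℕ} (e : EuclideanSpace ℝ (Fin (m + 1))) (he : ‖e‖ = 1) :
    ∃ Φ : ℝ × (Fin m → ℝ) → EuclideanSpace ℝ (Fin (m + 1)),
      MeasurePreserving Φ volume volume ∧ (∀ z, inner ℝ e (Φ z) = z.1) ∧
      ∀ (s t : ℝ) (z z' : ℝ × (Fin m → ℝ)), Φ (s • z + t • z') = s • Φ z + t • Φ z' := by
  obtain ⟨b, hb⟩ := Orthonormal.exists_orthonormalBasis_extension_of_card_eq (𝕜 := ℝ)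
    (E := EuclideanSpace ℝ (Fin (m + 1))) (ι := Fin (m + 1)) (by simp) (v := fun _ => e) (s := {0})
    (by
      refine ⟨fun i => by simpa using he, ?_⟩
      intro i j hij
      exact absurd (Subsingleton.elim i j) hij)
  have hb0 : b 0 = e := hb 0 (by simp)
  refine ⟨fun z => b.repr.symm (WithLp.toLp 2
    ((MeasurableEquiv.piFinSuccAbove (fun _ : Fin (m + 1) => ℝ) 0).symm z)), ?_, ?_, ?_⟩
  · exact (b.repr.symm.measurePreserving).comp ((PiLp.volume_preserving_toLp (Fin (m + 1))).comp
      (volume_preserving_piFinSuccAbove (fun _ : Fin (m + 1) => ℝ) 0).symm)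
  · intro z
    rw [← hb0, ← OrthonormalBasis.repr_apply_apply, LinearIsometryEquiv.apply_symm_apply]
    simp [MeasurableEquiv.piFinSuccAbove]
  · intro s t z z'
    have : WithLp.toLp 2 ((MeasurableEquiv.piFinSuccAbove (fun _ : Fin (m + 1) => ℝ) 0).symm
        (s • z + t • z')) =
        s • WithLp.toLp 2 ((MeasurableEquiv.piFinSuccAbove (fun _ : Fin (m + 1) => ℝ) 0).symm z) +
        t • WithLp.toLp 2
          ((MeasurableEquiv.piFinSuccAbove (fun _ : Fin (m + 1) => ℝ) 0).symm z') := by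
      ext i
      refine Fin.cases ?_ (fun j => ?_) i <;> simp [MeasurableEquiv.piFinSuccAbove]
    simp only [this, map_add, map_smul]

lemma thin_iso {m : ℕ} {g : EuclideanSpace ℝ (Fin (m + 1)) → ℝ≥0∞} (hg : Measurable g)
    (hgfin : ∫⁻ x, g x ≠ ∞)
    (hHM : ∀ s t : ℝ≥0, 0 < s → 0 < t → s + t = 1 → ∀ x y,
      HM m s t (g x) (g y) (g ((s:ℝ) • x + (t:ℝ) • y)))
    {D δ : ℝ} (hD : ∀ x y, g x ≠ 0 → g y ≠ 0 → dist x y ≤ D)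
    {e : EuclideanSpace ℝ (Fin (m + 1))} (he : ‖e‖ = 1)
    {S₁ S₂ S₃ : Set (EuclideanSpace ℝ (Fin (m + 1)))}
    (hm₁ : MeasurableSet S₁) (hm₂ : MeasurableSet S₂) (hm₃ : MeasurableSet S₃)
    (hcover : S₁ ∪ S₂ ∪ S₃ = univ)
    (hsep : ∀ x ∈ S₁, ∀ y ∈ S₂, g x ≠ 0 → g y ≠ 0 → δ ≤ |inner ℝ e (x - y)|) :
    ENNReal.ofReal δ * (∫⁻ x in S₁, g x) ≤ ENNReal.ofReal D * ∫⁻ x in S₃, g x ∨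
    ENNReal.ofReal δ * (∫⁻ x in S₂, g x) ≤ ENNReal.ofReal D * ∫⁻ x in S₃, g x := by
  obtain ⟨Φ, hΦ, hΦe, hΦl⟩ := exists_coord e he
  have hgΦ : Measurable (fun z => g (Φ z)) := hg.comp hΦ.measurable
  set A : ℝ → ℝ≥0∞ := fun r => ∫⁻ y, g (Φ (r, y)) with hAdef
  have hA : Measurable A := hgΦ.lintegral_prod_right'
  have hinner : Measurable (fun x : EuclideanSpace ℝ (Fin (m + 1)) => (inner ℝ e x : ℝ)) := by
    fun_prop
  have slice : ∀ Q : Set ℝ, MeasurableSet Q →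
      ∫⁻ r in Q, A r = ∫⁻ x in (fun x => (inner ℝ e x : ℝ)) ⁻¹' Q, g x := by
    intro Q hQ
    rw [← lintegral_indicator hQ, ← lintegral_indicator (hinner hQ),
      ← hΦ.lintegral_comp (hg.indicator (hinner hQ)), Measure.volume_eq_prod]
    have hmm : Measurable (fun z => ((fun x => (inner ℝ e x : ℝ)) ⁻¹' Q).indicator g (Φ z)) :=
      (hg.indicator (hinner hQ)).comp hΦ.measurable
    rw [lintegral_prod _ hmm.aemeasurable]
    congr 1
    ext r
    by_cases hr : r ∈ Q
    · simp [hr, indicator, hΦe, A]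
    · simp [hr, indicator, hΦe]
  have hfin : ∀ᵐ x, A x < ∞ := by
    apply ae_lt_top hA
    have := slice univ MeasurableSet.univ
    simp only [preimage_univ, Measure.restrict_univ] at this
    rwa [this]
  have hA0 : ∀ r, A r ≠ 0 → ∃ x, g x ≠ 0 ∧ inner ℝ e x = r := by
    intro r hr
    by_contra hcon
    push Not at hcon
    apply hr
    have : ∀ y, g (Φ (r, y)) = 0 := by
      intro y
      by_contra h0
      exact hcon _ h0 (hΦe _)
    simp [hAdef, this]
  have hdist : ∀ x y : EuclideanSpace ℝ (Fin (m + 1)),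
      |(inner ℝ e x : ℝ) - inner ℝ e y| ≤ dist x y := by
    intro x y
    rw [← inner_sub_right, dist_eq_norm]
    have := abs_real_inner_le_norm e (x - y)
    rwa [he, one_mul] at this
  set Q₁ : Set ℝ := closure {r | ∃ x ∈ S₁, g x ≠ 0 ∧ inner ℝ e x = r} with hQ₁
  set Q₂ : Set ℝ := closure {r | ∃ x ∈ S₂, g x ≠ 0 ∧ inner ℝ e x = r} with hQ₂
  have hQsep : ∀ x ∈ Q₁, ∀ y ∈ Q₂, δ ≤ |x - y| := by
    have hcl : IsClosed {z : ℝ × ℝ | δ ≤ |z.1 - z.2|} :=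
      isClosed_le continuous_const (by fun_prop)
    intro x hx y hy
    have hmem : (x, y) ∈ closure ({r | ∃ x ∈ S₁, g x ≠ 0 ∧ inner ℝ e x = r} ×ˢ
        {r | ∃ x ∈ S₂, g x ≠ 0 ∧ inner ℝ e x = r}) := by
      rw [closure_prod_eq]; exact ⟨hx, hy⟩
    refine (closure_minimal ?_ hcl) hmem
    rintro ⟨a, b⟩ ⟨⟨x, hx, hgx, rfl⟩, ⟨y, hy, hgy, rfl⟩⟩
    simp only [mem_ofPred_eq]
    rw [← inner_sub_right]
    exact hsep x hx y hy hgx hgy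
  have main := one_dim_iso hA (D := D) (δ := δ) ?_ hfin ?_ (isClosed_closure (s := {r | ∃ x ∈ S₁, g x ≠ 0 ∧ inner ℝ e x = r}))
    (isClosed_closure (s := {r | ∃ x ∈ S₂, g x ≠ 0 ∧ inner ℝ e x = r})) hQsep
  · rw [← hQ₁, ← hQ₂] at main
    have c1 : MeasurableSet Q₁ := isClosed_closure.measurableSet
    have c2 : MeasurableSet Q₂ := isClosed_closure.measurableSet
    rw [slice _ c1, slice _ c2, slice _ (c1.union c2).compl] at main
    have mono : ∀ (S : Set (EuclideanSpace ℝ (Fin (m + 1)))) (T), MeasurableSet S → MeasurableSet T →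
        (∀ x ∈ S, g x ≠ 0 → x ∈ T) → ∫⁻ x in S, g x ≤ ∫⁻ x in T, g x := by
      intro S T hS hT h
      rw [← lintegral_indicator hS, ← lintegral_indicator hT]
      apply lintegral_mono
      intro x
      by_cases hx : x ∈ S
      · by_cases h0 : g x = 0
        · simp [indicator, h0]
        · simp [hx, h x hx h0]
      · simp [hx]
    have i1 := mono S₁ _ hm₁ (hinner c1) (fun x hx h0 => subset_closure ⟨x, hx, h0, rfl⟩)
    have i2 := mono S₂ _ hm₂ (hinner c2) (fun x hx h0 => subset_closure ⟨x, hx, h0, rfl⟩)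
    have i3 := mono _ S₃ (hinner (c1.union c2).compl) hm₃ (by
      intro x hx h0
      have hxu : x ∈ S₁ ∪ S₂ ∪ S₃ := by rw [hcover]; trivial
      rcases hxu with (h | h) | h
      · exact absurd (show inner ℝ e x ∈ Q₁ ∪ Q₂ from Or.inl (subset_closure ⟨x, h, h0, rfl⟩)) hx
      · exact absurd (show inner ℝ e x ∈ Q₁ ∪ Q₂ from Or.inr (subset_closure ⟨x, h, h0, rfl⟩)) hx
      · exact h)
    refine main.imp (fun h => ?_) (fun h => ?_)
    · exact (mul_le_mul_right i1 _).trans (h.trans (mul_le_mul_right i3 _))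
    · exact (mul_le_mul_right i2 _).trans (h.trans (mul_le_mul_right i3 _))
  · intro r
    refine ⟨?_⟩
    intro a ha b hb z hz
    rw [← segment_eq_Icc (hz.1.trans hz.2)] at hz
    obtain ⟨s, t, hs, ht, hst, rfl⟩ := hz
    rcases hs.eq_or_lt with rfl | hs
    · have : t = 1 := by linarith
      subst this; simpa using hb
    rcases ht.eq_or_lt with rfl | ht
    · have : s = 1 := by linarith
      subst this; simpa using ha
    lift s to ℝ≥0 using hs.le
    lift t to ℝ≥0 using ht.le
    have hs' : 0 < s := by exact_mod_cast hs
    have ht' : 0 < t := by exact_mod_cast ht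
    have hm : ∀ r : ℝ, Measurable (fun y => g (Φ (r, y))) := fun r => hgΦ.comp measurable_prodMk_left
    have h := HM.multi hs' ht' m 0 (hm a) (hm b) (hm ((s:ℝ) • a + (t:ℝ) • b)) (by
      intro x y
      have := hHM s t hs' ht' (by exact_mod_cast hst) (Φ (a, x)) (Φ (b, y))
      rw [← hΦl] at this
      exact this)
    obtain ⟨c, hc1, hc2⟩ := ENNReal.lt_iff_exists_nnreal_btwn.1 (lt_min (show (r : ℝ≥0∞) < A a from ha) (show (r : ℝ≥0∞) < A b from hb))
    have := h c 1 1 one_pos one_pos (by simpa using (hc2.trans_le (min_le_left _ _)).le)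
      (by simpa using (hc2.trans_le (min_le_right _ _)).le)
    simp only [pow_zero, mul_one] at this
    exact hc1.trans_le this
  · intro a b ha hb
    obtain ⟨x, hx, rfl⟩ := hA0 a ha
    obtain ⟨y, hy, rfl⟩ := hA0 b hb
    exact (hdist x y).trans (hD x y hx hy)


lemma null_line {n : ℕ} {i j : Fin n} (hij : i ≠ j) (q r a b : ℝ) (hab : a ≠ 0 ∨ b ≠ 0) :
    volume {x : EuclideanSpace ℝ (Fin n) | a * (x i - q) + b * (x j - r) = 0} = 0 := by
  let L : EuclideanSpace ℝ (Fin n) →ₗ[ℝ] ℝ :=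
    a • (EuclideanSpace.proj i : EuclideanSpace ℝ (Fin n) →L[ℝ] ℝ).toLinearMap +
    b • (EuclideanSpace.proj j : EuclideanSpace ℝ (Fin n) →L[ℝ] ℝ).toLinearMap
  have hL : ∀ x, L x = a * x i + b * x j := fun x => by simp [L]
  let x0 : EuclideanSpace ℝ (Fin n) := EuclideanSpace.single i q + EuclideanSpace.single j r
  have hx0 : L x0 = a * q + b * r := by
    rw [hL]; simp [x0, hij, hij.symm]
  have hker : (LinearMap.ker L) ≠ ⊤ := by
    intro h
    have h1 : L (EuclideanSpace.single i 1) = 0 := by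
      rw [← LinearMap.mem_ker, h]; trivial
    have h2 : L (EuclideanSpace.single j 1) = 0 := by
      rw [← LinearMap.mem_ker, h]; trivial
    rw [hL] at h1 h2
    simp [hij, hij.symm] at h1 h2
    rcases hab with h | h
    · exact h h1
    · exact h h2
  have hnull := Measure.addHaar_submodule (volume : Measure (EuclideanSpace ℝ (Fin n))) _ hker
  have e : {x : EuclideanSpace ℝ (Fin n) | a * (x i - q) + b * (x j - r) = 0} =
      (fun x => x + (-x0)) ⁻¹' (LinearMap.ker L : Set (EuclideanSpace ℝ (Fin n))) := by
    ext x
    simp only [mem_ofPred_eq, mem_preimage, SetLike.mem_coe, LinearMap.mem_ker, map_add, map_neg,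
      hx0, hL x]
    constructor <;> intro h <;> linarith
  rw [e, measure_preimage_add_right]
  exact hnull

lemma bisect {n : ℕ} {i j : Fin n} (hij : i ≠ j) (q r : ℝ) {u : EuclideanSpace ℝ (Fin n) → ℝ}
    (hu : Integrable u) : ∃ a b : ℝ, (a ≠ 0 ∨ b ≠ 0) ∧
    ∫ x in {x | 0 ≤ a * (x i - q) + b * (x j - r)}, u x = (∫ x, u x) / 2 ∧
    ∫ x in {x | 0 ≤ -a * (x i - q) + -b * (x j - r)}, u x = (∫ x, u x) / 2 := by
  let l : ℝ → EuclideanSpace ℝ (Fin n) → ℝ := fun θ x =>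
    Real.cos θ * (x i - q) + Real.sin θ * (x j - r)
  have hne : ∀ θ, Real.cos θ ≠ 0 ∨ Real.sin θ ≠ 0 := by
    intro θ
    by_contra h
    push Not at h
    have := Real.sin_sq_add_cos_sq θ
    simp [h.1, h.2] at this
  have hnull : ∀ θ, ∀ᵐ x, l θ x ≠ 0 := by
    intro θ
    rw [ae_iff]
    simpa [l] using null_line hij q r _ _ (hne θ)
  have hmeas : ∀ θ, MeasurableSet {x | 0 ≤ l θ x} := by
    intro θ
    apply measurableSet_le measurable_const
    fun_prop
  have hmeas' : ∀ θ, MeasurableSet {x | l θ x ≤ 0} := by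
    intro θ
    refine measurableSet_le ?_ measurable_const
    fun_prop
  let G : ℝ → ℝ := fun θ => ∫ x, {x | 0 ≤ l θ x}.indicator u x
  have hG : Continuous G := by
    rw [continuous_iff_continuousAt]
    intro θ0
    refine continuousAt_of_dominated (bound := fun x => ‖u x‖) ?_ ?_ hu.norm ?_
    · exact Filter.Eventually.of_forall fun θ => (hu.indicator (hmeas θ)).aestronglyMeasurable
    · refine Filter.Eventually.of_forall fun θ => Filter.Eventually.of_forall fun x => ?_
      exact norm_indicator_le_norm_self _ _
    · filter_upwards [hnull θ0] with x hx
      have hcont : Continuous (fun θ => l θ x) := by fun_prop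
      rcases lt_or_gt_of_ne hx with h | h
      · have : (fun θ => {x | 0 ≤ l θ x}.indicator u x) =ᶠ[nhds θ0] fun _ => 0 := by
          filter_upwards [hcont.continuousAt.eventually_lt continuousAt_const h] with θ hθ
          simp [indicator, hθ]
        exact continuousAt_const.congr this.symm
      · have : (fun θ => {x | 0 ≤ l θ x}.indicator u x) =ᶠ[nhds θ0] fun _ => u x := by
          filter_upwards [continuousAt_const.eventually_lt hcont.continuousAt h] with θ hθ
          simp [indicator, hθ.le]
        exact continuousAt_const.congr this.symm
  have hcompl : ∀ θ, G θ + ∫ x in {x | l θ x ≤ 0}, u x = ∫ x, u x := by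
    intro θ
    simp only [G]
    rw [integral_indicator (hmeas θ), ← integral_add_compl (hmeas θ) hu]
    congr 1
    apply setIntegral_congr_set
    filter_upwards [hnull θ] with x hx
    apply propext
    show l θ x ≤ 0 ↔ ¬ (0 ≤ l θ x)
    rw [not_le]
    exact ⟨fun h => lt_of_le_of_ne h hx, le_of_lt⟩
  have hpi : G 0 + G Real.pi = ∫ x, u x := by
    rw [← hcompl 0]
    congr 1
    simp only [G]
    rw [integral_indicator (hmeas _)]
    congr 2
    ext x
    simp [l]
  have hmem : (∫ x, u x) / 2 ∈ uIcc (G 0) (G Real.pi) := by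
    rw [mem_uIcc]
    rcases le_total (G 0) (G Real.pi) with h | h
    · left; constructor <;> linarith
    · right; constructor <;> linarith
  obtain ⟨θ, -, hθ⟩ := intermediate_value_uIcc hG.continuousOn hmem
  refine ⟨Real.cos θ, Real.sin θ, hne θ, ?_, ?_⟩
  · rw [← hθ]
    exact (integral_indicator (hmeas θ)).symm
  · have := hcompl θ
    have e : {x : EuclideanSpace ℝ (Fin n) | 0 ≤ -Real.cos θ * (x i - q) + -Real.sin θ * (x j - r)} =
        {x | l θ x ≤ 0} := by
      ext x
      simp only [mem_ofPred_eq, l]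
      constructor <;> intro h <;> linarith
    rw [e]
    linarith

lemma cut_step {n : ℕ} {i j : Fin n} (hij : i ≠ j) (q r : ℝ)
    {u₁ u₂ : EuclideanSpace ℝ (Fin n) → ℝ} (hu₁ : Integrable u₁) (hu₂ : Integrable u₂)
    {C : Set (EuclideanSpace ℝ (Fin n))} (hC : IsClosed C) (hCc : Convex ℝ C)
    (h1 : 0 < ∫ x in C, u₁ x) (h2 : 0 < ∫ x in C, u₂ x) :
    ∃ C' ⊆ C, IsClosed C' ∧ Convex ℝ C' ∧ 0 < ∫ x in C', u₁ x ∧ 0 < ∫ x in C', u₂ x ∧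
      ∃ a b : ℝ, (a ≠ 0 ∨ b ≠ 0) ∧ ∀ x ∈ C', 0 ≤ a * (x i - q) + b * (x j - r) := by
  obtain ⟨a, b, hab, hp, hn⟩ := bisect hij q r (hu₁.indicator hC.measurableSet)
  have hclosed : ∀ a b : ℝ, IsClosed {x : EuclideanSpace ℝ (Fin n) | 0 ≤ a * (x i - q) + b * (x j - r)} := by
    intro a b
    exact isClosed_le continuous_const (by fun_prop)
  have hconv : ∀ a b : ℝ, Convex ℝ {x : EuclideanSpace ℝ (Fin n) | 0 ≤ a * (x i - q) + b * (x j - r)} := by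
    intro a b x hx y hy s t hs ht hst
    simp only [mem_ofPred_eq, PiLp.add_apply, PiLp.smul_apply, smul_eq_mul] at *
    have := add_nonneg (mul_nonneg hs hx) (mul_nonneg ht hy)
    have e : t = 1 - s := by linarith
    subst e
    linarith
  have hres : ∀ a b : ℝ, ∫ x in {x : EuclideanSpace ℝ (Fin n) | 0 ≤ a * (x i - q) + b * (x j - r)},
      C.indicator u₁ x = ∫ x in C ∩ {x | 0 ≤ a * (x i - q) + b * (x j - r)}, u₁ x := by
    intro a b
    rw [setIntegral_indicator hC.measurableSet, inter_comm]
  rw [hres, integral_indicator hC.measurableSet] at hp hn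
  have hsum : ∫ x in C, u₂ x =
      (∫ x in C ∩ {x | 0 ≤ a * (x i - q) + b * (x j - r)}, u₂ x) +
      ∫ x in C ∩ {x | 0 ≤ -a * (x i - q) + -b * (x j - r)}, u₂ x := by
    rw [← integral_inter_add_sdiff (hclosed a b).measurableSet hu₂.integrableOn]
    congr 1
    apply setIntegral_congr_set
    have hz := null_line hij q r a b hab
    have : ∀ᵐ x : EuclideanSpace ℝ (Fin n), a * (x i - q) + b * (x j - r) ≠ 0 := by
      rw [ae_iff]; simpa using hz
    filter_upwards [this] with x hx
    apply propext
    show (x ∈ C ∧ ¬ (0 ≤ a * (x i - q) + b * (x j - r))) ↔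
      (x ∈ C ∧ 0 ≤ -a * (x i - q) + -b * (x j - r))
    refine and_congr_right fun _ => ?_
    rw [not_le]
    constructor
    · intro h; linarith
    · intro h
      exact lt_of_le_of_ne (by linarith) hx
  by_cases hpos : 0 < ∫ x in C ∩ {x | 0 ≤ a * (x i - q) + b * (x j - r)}, u₂ x
  · refine ⟨_, inter_subset_left, hC.inter (hclosed a b), hCc.inter (hconv a b), ?_, hpos,
      a, b, hab, fun x hx => hx.2⟩
    rw [hp]; linarith
  · refine ⟨_, inter_subset_left, hC.inter (hclosed (-a) (-b)), hCc.inter (hconv (-a) (-b)), ?_, ?_,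
      -a, -b, by simpa using hab, fun x hx => hx.2⟩
    · rw [hn]; linarith
    · linarith


lemma rat_bary {x1 x2 y1 y2 z1 z2 : ℝ}
    (hΔ : (y1 - x1) * (z2 - x2) - (y2 - x2) * (z1 - x1) ≠ 0) :
    ∃ q r : ℚ, ∃ w1 w2 w3 : ℝ, 0 < w1 ∧ 0 < w2 ∧ 0 < w3 ∧ w1 + w2 + w3 = 1 ∧
      w1 * x1 + w2 * y1 + w3 * z1 = q ∧ w1 * x2 + w2 * y2 + w3 * z2 = r := by
  set Δ := (y1 - x1) * (z2 - x2) - (y2 - x2) * (z1 - x1) with hΔd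
  let g2 : ℝ × ℝ → ℝ := fun p => ((p.1 - x1) * (z2 - x2) - (p.2 - x2) * (z1 - x1)) / Δ
  let g3 : ℝ × ℝ → ℝ := fun p => ((y1 - x1) * (p.2 - x2) - (y2 - x2) * (p.1 - x1)) / Δ
  have c2 : Continuous g2 := by fun_prop
  have c3 : Continuous g3 := by fun_prop
  have hopen : IsOpen {p : ℝ × ℝ | 0 < g2 p ∧ 0 < g3 p ∧ 0 < 1 - g2 p - g3 p} := by
    have c1 : Continuous fun p => 1 - g2 p - g3 p := by fun_prop
    exact (isOpen_lt continuous_const c2).inter ((isOpen_lt continuous_const c3).inter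
      (isOpen_lt continuous_const c1))
  have hne : {p : ℝ × ℝ | 0 < g2 p ∧ 0 < g3 p ∧ 0 < 1 - g2 p - g3 p}.Nonempty := by
    refine ⟨((x1 + y1 + z1) / 3, (x2 + y2 + z2) / 3), ?_⟩
    have e2 : g2 ((x1 + y1 + z1) / 3, (x2 + y2 + z2) / 3) = 1 / 3 := by
      simp only [g2]; rw [div_eq_iff hΔ, hΔd]; ring
    have e3 : g3 ((x1 + y1 + z1) / 3, (x2 + y2 + z2) / 3) = 1 / 3 := by
      simp only [g3]; rw [div_eq_iff hΔ, hΔd]; ring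
    simp only [mem_ofPred_eq, e2, e3]
    norm_num
  have hdense : DenseRange (Prod.map ((↑) : ℚ → ℝ) ((↑) : ℚ → ℝ)) :=
    Rat.denseRange_cast.prodMap Rat.denseRange_cast
  obtain ⟨⟨q, r⟩, h2, h3, h1⟩ := hdense.exists_mem_open hopen hne
  refine ⟨q, r, _, _, _, h1, h2, h3, by ring, ?_, ?_⟩
  · simp only [g2, g3, Prod.map]
    field_simp
    rw [hΔd]; ring
  · simp only [g2, g3, Prod.map]
    field_simp
    rw [hΔd]; ring

lemma minor_zero {x1 x2 y1 y2 z1 z2 : ℝ}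
    (h : ∀ q r : ℚ, ∃ a b : ℝ, (a ≠ 0 ∨ b ≠ 0) ∧ 0 ≤ a * (x1 - q) + b * (x2 - r) ∧
      0 ≤ a * (y1 - q) + b * (y2 - r) ∧ 0 ≤ a * (z1 - q) + b * (z2 - r)) :
    (y1 - x1) * (z2 - x2) - (y2 - x2) * (z1 - x1) = 0 := by
  by_contra hΔ
  obtain ⟨q, r, w1, w2, w3, h1, h2, h3, hs, hq, hr⟩ := rat_bary hΔ
  obtain ⟨a, b, hab, ha, hb, hc⟩ := h q r
  have hsum : w1 * (a * (x1 - q) + b * (x2 - r)) + w2 * (a * (y1 - q) + b * (y2 - r)) +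
      w3 * (a * (z1 - q) + b * (z2 - r)) = 0 := by
    rw [← hq, ← hr]
    have : w1 = 1 - w2 - w3 := by linarith
    subst this
    ring
  have k1 := mul_nonneg h1.le ha
  have k2 := mul_nonneg h2.le hb
  have k3 := mul_nonneg h3.le hc
  have z1' : a * (x1 - q) + b * (x2 - r) = 0 :=
    (mul_eq_zero.1 (show w1 * _ = 0 by linarith)).resolve_left h1.ne'
  have z2' : a * (y1 - q) + b * (y2 - r) = 0 :=
    (mul_eq_zero.1 (show w2 * _ = 0 by linarith)).resolve_left h2.ne'
  have z3' : a * (z1 - q) + b * (z2 - r) = 0 :=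
    (mul_eq_zero.1 (show w3 * _ = 0 by linarith)).resolve_left h3.ne'
  have d1 : a * (y1 - x1) + b * (y2 - x2) = 0 := by linarith
  have d2 : a * (z1 - x1) + b * (z2 - x2) = 0 := by linarith
  have fa : a * ((y1 - x1) * (z2 - x2) - (y2 - x2) * (z1 - x1)) = 0 := by
    linear_combination (z2 - x2) * d1 - (y2 - x2) * d2
  have fb : b * ((y1 - x1) * (z2 - x2) - (y2 - x2) * (z1 - x1)) = 0 := by
    linear_combination (y1 - x1) * d2 - (z1 - x1) * d1
  rcases hab with h | h
  · exact hΔ ((mul_eq_zero.1 fa).resolve_left h)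
  · exact hΔ ((mul_eq_zero.1 fb).resolve_left h)

lemma localize {m : ℕ} {u₁ u₂ : EuclideanSpace ℝ (Fin (m + 1)) → ℝ} (hu₁ : Integrable u₁)
    (hu₂ : Integrable u₂) {C₀ : Set (EuclideanSpace ℝ (Fin (m + 1)))} (hC : IsCompact C₀)
    (hCc : Convex ℝ C₀) (h1 : 0 < ∫ x in C₀, u₁ x) (h2 : 0 < ∫ x in C₀, u₂ x) {δ dd : ℝ}
    (hδ : δ < dd) :
    ∃ C ⊆ C₀, IsClosed C ∧ Convex ℝ C ∧ 0 < ∫ x in C, u₁ x ∧ 0 < ∫ x in C, u₂ x ∧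
      ∃ e : EuclideanSpace ℝ (Fin (m + 1)), ‖e‖ = 1 ∧
        ∀ x ∈ C, ∀ y ∈ C, dd ≤ dist x y → δ < |inner ℝ e (x - y)| := by
  classical
  let St := {C : Set (EuclideanSpace ℝ (Fin (m + 1))) // IsClosed C ∧ Convex ℝ C ∧ 0 < ∫ x in C, u₁ x ∧ 0 < ∫ x in C, u₂ x}
  let T := Fin (m + 1) × Fin (m + 1) × ℚ × ℚ
  obtain ⟨φ, hφ⟩ := exists_surjective_nat T
  have step : ∀ (C : St) (τ : T), ∃ C' : St, C'.1 ⊆ C.1 ∧ (τ.1 ≠ τ.2.1 →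
      ∃ a b : ℝ, (a ≠ 0 ∨ b ≠ 0) ∧
        ∀ x ∈ C'.1, 0 ≤ a * (x τ.1 - τ.2.2.1) + b * (x τ.2.1 - τ.2.2.2)) := by
    rintro ⟨C, hc, hcc, k1, k2⟩ ⟨i, j, q, r⟩
    by_cases hij : i = j
    · exact ⟨⟨C, hc, hcc, k1, k2⟩, subset_rfl, fun h => absurd hij h⟩
    · obtain ⟨C', hs, a1, a2, a3, a4, a5⟩ := cut_step hij (q : ℝ) (r : ℝ) hu₁ hu₂ hc hcc k1 k2
      exact ⟨⟨C', a1, a2, a3, a4⟩, hs, fun _ => a5⟩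
  choose nx hnx1 hnx2 using step
  let S : ℕ → St := fun k => Nat.rec ⟨C₀, hC.isClosed, hCc, h1, h2⟩ (fun k C => nx C (φ k)) k
  have hS0 : (S 0).1 = C₀ := rfl
  have hSs : ∀ k, S (k + 1) = nx (S k) (φ k) := fun k => rfl
  have hmono : ∀ k, (S (k + 1)).1 ⊆ (S k).1 := fun k => by rw [hSs]; exact hnx1 _ _
  have hsub0 : ∀ k, (S k).1 ⊆ C₀ := by
    intro k
    induction k with
    | zero => exact subset_rfl
    | succ k ih => exact (hmono k).trans ih
  -- all minors vanish on the intersection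
  have hminor : ∀ x y z : EuclideanSpace ℝ (Fin (m + 1)), (∀ k, x ∈ (S k).1) → (∀ k, y ∈ (S k).1) → (∀ k, z ∈ (S k).1) →
      ∀ i j, (y i - x i) * (z j - x j) - (y j - x j) * (z i - x i) = 0 := by
    intro x y z hx hy hz i j
    by_cases hij : i = j
    · subst hij; ring
    · apply minor_zero
      intro q r
      obtain ⟨k, hk⟩ := hφ (i, j, q, r)
      have := hnx2 (S k) (φ k)
      rw [← hSs, hk] at this
      obtain ⟨a, b, hab, hh⟩ := this hij
      exact ⟨a, b, hab, hh x (hx (k + 1)), hh y (hy (k + 1)), hh z (hz (k + 1))⟩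
  have hexe : ∃ e : EuclideanSpace ℝ (Fin (m + 1)), ‖e‖ = 1 ∧ ∀ p p' : EuclideanSpace ℝ (Fin (m + 1)), (∀ k, p ∈ (S k).1) → (∀ k, p' ∈ (S k).1) →
      |inner ℝ e (p - p')| = ‖p - p'‖ := by
    by_cases hex : ∃ x y : EuclideanSpace ℝ (Fin (m + 1)), (∀ k, x ∈ (S k).1) ∧ (∀ k, y ∈ (S k).1) ∧ x ≠ y
    · obtain ⟨x, y, hx, hy, hxy⟩ := hex
      have hv : y - x ≠ 0 := sub_ne_zero.2 hxy.symm
      have hvn : ‖y - x‖ ≠ 0 := norm_ne_zero_iff.2 hv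
      refine ⟨(‖y - x‖)⁻¹ • (y - x), ?_, ?_⟩
      · rw [norm_smul, norm_inv, norm_norm, inv_mul_cancel₀ hvn]
      · intro p p' hp hp'
        obtain ⟨k, hk⟩ : ∃ k, (y - x) k ≠ 0 := by
          by_contra hcon
          push Not at hcon
          exact hv (by ext k; simpa using hcon k)
        have hw : p - p' = ((p - p') k / (y - x) k) • (y - x) := by
          ext j
          have e1 := hminor x y p hx hy hp k j
          have e2 := hminor x y p' hx hy hp' k j
          simp only [PiLp.sub_apply, PiLp.smul_apply, smul_eq_mul] at *
          rw [div_mul_eq_mul_div, eq_div_iff hk]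
          linear_combination e1 - e2
        rw [hw, inner_smul_left, inner_smul_right, real_inner_self_eq_norm_sq, norm_smul,
          Real.norm_eq_abs]
        simp only [map_inv₀, conj_trivial]
        rw [show (‖y - x‖)⁻¹ * (((p - p') k / (y - x) k) * ‖y - x‖ ^ 2) =
          ((p - p') k / (y - x) k) * ‖y - x‖ by field_simp]
        rw [abs_mul, abs_norm]
    · push Not at hex
      refine ⟨EuclideanSpace.single 0 1, by simp, fun p p' hp hp' => ?_⟩
      rw [hex p p' hp hp']; simp
  obtain ⟨e, he, hee⟩ := hexe
  suffices hk : ∃ k, ∀ x ∈ (S k).1, ∀ y ∈ (S k).1, dd ≤ dist x y → δ < |inner ℝ e (x - y)| by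
    obtain ⟨k, hk⟩ := hk
    exact ⟨(S k).1, hsub0 k, (S k).2.1, (S k).2.2.1, (S k).2.2.2.1, (S k).2.2.2.2, e, he, hk⟩
  by_contra hcon
  push Not at hcon
  let t : ℕ → Set (EuclideanSpace ℝ (Fin (m + 1)) × EuclideanSpace ℝ (Fin (m + 1))) := fun k => ((S k).1 ×ˢ (S k).1) ∩
    {p | dd ≤ dist p.1 p.2 ∧ |inner ℝ e (p.1 - p.2)| ≤ δ}
  have hcl : IsClosed {p : EuclideanSpace ℝ (Fin (m + 1)) × EuclideanSpace ℝ (Fin (m + 1)) | dd ≤ dist p.1 p.2 ∧ |inner ℝ e (p.1 - p.2)| ≤ δ} := by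
    have c1 : Continuous fun p : EuclideanSpace ℝ (Fin (m + 1)) × EuclideanSpace ℝ (Fin (m + 1)) =>
      dist p.1 p.2 := by fun_prop
    have c2 : Continuous fun p : EuclideanSpace ℝ (Fin (m + 1)) × EuclideanSpace ℝ (Fin (m + 1)) =>
      |inner ℝ e (p.1 - p.2)| := by fun_prop
    exact (isClosed_le continuous_const c1).inter (isClosed_le c2 continuous_const)
  have htcl : ∀ k, IsClosed (t k) := fun k => ((S k).2.1.prod (S k).2.1).inter hcl
  obtain ⟨⟨p, p'⟩, hp⟩ := IsCompact.nonempty_iInter_of_sequence_nonempty_isCompact_isClosed t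
    (fun k => inter_subset_inter_left _ (prod_mono (hmono k) (hmono k)))
    (fun k => by
      obtain ⟨x, hx, y, hy, h3, h4⟩ := hcon k
      exact ⟨(x, y), ⟨hx, hy⟩, h3, h4⟩)
    ((hC.prod hC).inter_right hcl) htcl
  rw [mem_iInter] at hp
  have := hee p p' (fun k => (hp k).1.1) (fun k => (hp k).1.2)
  have h3 := (hp 0).2.1
  have h4 := (hp 0).2.2
  simp only at h3 h4
  rw [this, ← dist_eq_norm] at h4
  linarith


lemma rpow_inv_pow {m : ℕ} (hm : m ≠ 0) {A : ℝ} (hA : 0 < A) :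
    A * (A ^ (-(1 / (m : ℝ)))) ^ m = 1 := by
  have hm' : (m : ℝ) ≠ 0 := by exact_mod_cast hm
  rw [← Real.rpow_natCast, ← Real.rpow_mul hA.le]
  rw [show -(1 / (m : ℝ)) * m = -1 by field_simp, Real.rpow_neg_one]
  exact mul_inv_cancel₀ hA.ne'

lemma hm_scalar {m : ℕ} (hm : m ≠ 0) {s t : ℝ≥0} {A B W : ℝ} (hA : 0 < A) (hB : 0 < B) (hW : 0 < W)
    (h : W ^ (-(1 / (m : ℝ))) ≤ s * A ^ (-(1 / (m : ℝ))) + t * B ^ (-(1 / (m : ℝ)))) :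
    HM m s t (ENNReal.ofReal A) (ENNReal.ofReal B) (ENNReal.ofReal W) := by
  intro c p q hp hq h1 h2
  have conv : ∀ (c' p' : ℝ≥0) (A' : ℝ), 0 < A' →
      ((c' : ℝ≥0∞) ≤ ENNReal.ofReal A' * (p' : ℝ≥0∞) ^ m ↔ (c' : ℝ) ≤ A' * (p' : ℝ) ^ m) := by
    intro c' p' A' hA'
    rw [← ENNReal.ofReal_coe_nnreal (p := p'), ← ENNReal.ofReal_pow (NNReal.coe_nonneg p'),
      ← ENNReal.ofReal_mul hA'.le, ← ENNReal.ofReal_coe_nnreal (p := c'),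
      ENNReal.ofReal_le_ofReal_iff (by positivity)]
  rw [conv _ _ _ hA] at h1
  rw [conv _ _ _ hB] at h2
  rw [conv _ _ _ hW]
  set ω := W ^ (-(1 / (m : ℝ))) with hω
  set α := A ^ (-(1 / (m : ℝ))) with hα
  set β := B ^ (-(1 / (m : ℝ))) with hβ
  have eω : W * ω ^ m = 1 := rpow_inv_pow hm hW
  have eα : A * α ^ m = 1 := rpow_inv_pow hm hA
  have eβ : B * β ^ m = 1 := rpow_inv_pow hm hB
  have pα : 0 < α := Real.rpow_pos_of_pos hA _
  have pβ : 0 < β := Real.rpow_pos_of_pos hB _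
  have pω : 0 < ω := Real.rpow_pos_of_pos hW _
  obtain ⟨γ, hγ0, hγ⟩ : ∃ γ : ℝ, 0 ≤ γ ∧ γ ^ m = c :=
    ⟨(c : ℝ) ^ (1 / (m : ℝ)), by positivity, by
      rw [one_div]; exact Real.rpow_inv_natCast_pow c.2 hm⟩
  rw [← hγ] at h1 h2 ⊢
  have k1 : γ * α ≤ p := by
    refine le_of_pow_le_pow_left₀ hm p.2 ?_
    calc (γ * α) ^ m = γ ^ m * α ^ m := mul_pow _ _ _
      _ ≤ A * (p : ℝ) ^ m * α ^ m := by gcongr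
      _ = (A * α ^ m) * (p : ℝ) ^ m := by ring
      _ = (p : ℝ) ^ m := by rw [eα, one_mul]
  have k2 : γ * β ≤ q := by
    refine le_of_pow_le_pow_left₀ hm q.2 ?_
    calc (γ * β) ^ m = γ ^ m * β ^ m := mul_pow _ _ _
      _ ≤ B * (q : ℝ) ^ m * β ^ m := by gcongr
      _ = (B * β ^ m) * (q : ℝ) ^ m := by ring
      _ = (q : ℝ) ^ m := by rw [eβ, one_mul]
  have k3 : γ * ω ≤ s * p + t * q := by
    have a1 := mul_le_mul_of_nonneg_left h hγ0
    have a2 := mul_le_mul_of_nonneg_left k1 s.2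
    have a3 := mul_le_mul_of_nonneg_left k2 t.2
    simp only [NNReal.val_eq_coe] at a2 a3
    nlinarith
  calc γ ^ m = (W * ω ^ m) * γ ^ m := by rw [eω, one_mul]
    _ = W * (γ * ω) ^ m := by rw [mul_pow]; ring
    _ ≤ W * ((s * p + t * q : ℝ≥0) : ℝ) ^ m := by
        push_cast
        gcongr

lemma iso_core {m : ℕ} (hm : m ≠ 0)
    (f : EuclideanSpace ℝ (Fin (m + 1)) → ℝ) (K : Set (EuclideanSpace ℝ (Fin (m + 1))))
    (hK : Convex ℝ K) (hpos : ∀ x ∈ K, 0 < f x) (hzero : ∀ x ∉ K, f x = 0)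
    (hint : Integrable f)
    (hhc : ConvexOn ℝ K (fun x => f x ^ (-(1 / (m : ℝ)))))
    (D : ℝ) (hD : 0 < D) (hdiam : ∀ x ∈ K, ∀ y ∈ K, dist x y ≤ D)
    (S₁ S₂ S₃ : Set (EuclideanSpace ℝ (Fin (m + 1))))
    (hm₁ : MeasurableSet S₁) (hm₂ : MeasurableSet S₂) (hm₃ : MeasurableSet S₃)
    (hcover : S₁ ∪ S₂ ∪ S₃ = univ)
    (dd : ℝ) (hdd : 0 ≤ dd) (hsep : ∀ u ∈ S₁, ∀ v ∈ S₂, dd ≤ dist u v) :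
    (dd / D) * min (∫ x in S₁, f x) (∫ x in S₂, f x) ≤ ∫ x in S₃, f x := by
  classical
  have hf0 : ∀ x, 0 ≤ f x := fun x => by
    by_cases hx : x ∈ K
    · exact (hpos x hx).le
    · exact (hzero x hx).ge
  set F := (interior K).indicator f with hFdef
  have hFf : F =ᵐ[volume] f := by
    have hfr : ∀ᵐ x, x ∉ frontier K := by
      rw [ae_iff]; simpa using hK.addHaar_frontier volume
    filter_upwards [hfr] with x hx
    by_cases hxi : x ∈ interior K
    · simp [F, hxi]
    · have : x ∉ K := fun hxK => hx ⟨subset_closure hxK, hxi⟩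
      simp [F, hxi, hzero x this]
  have hF0 : ∀ x, 0 ≤ F x := fun x => indicator_nonneg (fun x _ => hf0 x) x
  have hFint : Integrable F := hint.congr hFf.symm
  have hFm : Measurable F := by
    have hc : ContinuousOn f (interior K) := by
      have h1 := hhc.continuousOn_interior
      have h2 : ContinuousOn (fun x => (f x ^ (-(1 / (m : ℝ)))) ^ (-(m : ℝ))) (interior K) :=
        h1.rpow_const fun x hx =>
          Or.inl (Real.rpow_pos_of_pos (hpos x (interior_subset hx)) _).ne'
      refine h2.congr fun x hx => ?_
      have hm' : (m : ℝ) ≠ 0 := by exact_mod_cast hm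
      show f x = (f x ^ (-(1 / (m : ℝ)))) ^ (-(m : ℝ))
      rw [← Real.rpow_mul (hf0 x), show -(1 / (m : ℝ)) * -(m : ℝ) = 1 by field_simp, Real.rpow_one]
    have := hc.measurable_piecewise (g := (0 : EuclideanSpace ℝ (Fin (m + 1)) → ℝ)) continuousOn_const
      isOpen_interior.measurableSet
    rwa [piecewise_eq_indicator] at this
  have hS : ∀ S, ∫ x in S, f x = ∫ x in S, F x := fun S =>
    integral_congr_ae (ae_restrict_of_ae hFf.symm)
  rw [hS, hS, hS]
  have hSn : ∀ S, 0 ≤ ∫ x in S, F x := fun S => integral_nonneg hF0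
  by_contra hcon
  push Not at hcon
  set μ := min (∫ x in S₁, F x) (∫ x in S₂, F x) with hμ
  have hμ0 : 0 ≤ μ := le_min (hSn _) (hSn _)
  have hprod : 0 < dd / D * μ := (hSn S₃).trans_lt hcon
  have hμp : 0 < μ := lt_of_le_of_ne hμ0 (by rintro h; rw [← h] at hprod; simp at hprod)
  obtain ⟨δ, hδ1, hδ2⟩ : ∃ δ, (∫ x in S₃, F x) * D / μ < δ ∧ δ < dd := by
    apply exists_between
    rw [div_lt_iff₀ hμp]
    calc (∫ x in S₃, F x) * D < dd / D * μ * D := by gcongr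
      _ = dd * μ := by field_simp
  have hδ0 : 0 < δ := lt_of_le_of_lt (div_nonneg (mul_nonneg (hSn _) hD.le) hμ0) hδ1
  have hlt : ∫ x in S₃, F x < δ / D * μ := by
    rw [div_lt_iff₀ hμp] at hδ1
    rw [div_mul_eq_mul_div, lt_div_iff₀ hD]
    exact hδ1
  let u : Set (EuclideanSpace ℝ (Fin (m + 1))) → EuclideanSpace ℝ (Fin (m + 1)) → ℝ :=
    fun S x => δ / D * S.indicator F x - S₃.indicator F x
  have hui : ∀ S, MeasurableSet S → Integrable (u S) := fun S hSm =>
    ((hFint.indicator hSm).const_mul _).sub (hFint.indicator hm₃)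
  have huC : ∀ S, MeasurableSet S → ∀ C, MeasurableSet C →
      ∫ x in C, u S x = δ / D * (∫ x in S, C.indicator F x) - ∫ x in S₃, C.indicator F x := by
    intro S hSm C hC
    have e1 : ∀ S, MeasurableSet S → ∫ x in S, C.indicator F x = ∫ x in C, S.indicator F x := by
      intro S hSm
      rw [setIntegral_indicator hC, setIntegral_indicator hSm, inter_comm]
    rw [e1 S hSm, e1 S₃ hm₃]
    simp only [u]
    rw [integral_sub ((hFint.indicator hSm).const_mul _).integrableOn
      (hFint.indicator hm₃).integrableOn, integral_const_mul]
  have hbdd : Bornology.IsBounded K := Metric.isBounded_iff.2 ⟨D, fun x hx y hy => hdiam x hx y hy⟩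
  have hcomp : IsCompact (closure K) := hbdd.isCompact_closure
  have hcl : (closure K).indicator F = F := by
    rw [indicator_eq_self]
    intro x hx
    by_contra hxc
    exact hx (indicator_of_notMem (fun h => hxc (subset_closure (interior_subset h))) _)
  have hu0 : ∀ S, MeasurableSet S → μ ≤ ∫ x in S, F x → 0 < ∫ x in closure K, u S x := by
    intro S hSm hle
    rw [huC S hSm _ isClosed_closure.measurableSet, hcl]
    have : δ / D * μ ≤ δ / D * ∫ x in S, F x := by gcongr
    linarith
  obtain ⟨C, -, hCcl, hCc, p1, p2, e, he, hee⟩ := localize (hui S₁ hm₁) (hui S₂ hm₂) hcomp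
    hK.closure (hu0 S₁ hm₁ (min_le_left _ _)) (hu0 S₂ hm₂ (min_le_right _ _)) hδ2
  rw [huC _ hm₁ _ hCcl.measurableSet] at p1
  rw [huC _ hm₂ _ hCcl.measurableSet] at p2
  set g₀ := C.indicator F with hg₀
  have hg0 : ∀ x, 0 ≤ g₀ x := fun x => indicator_nonneg (fun x _ => hF0 x) x
  have hgi : Integrable g₀ := hFint.indicator hCcl.measurableSet
  have hgm : Measurable g₀ := hFm.indicator hCcl.measurableSet
  have hlint : ∀ S, ∫⁻ x in S, ENNReal.ofReal (g₀ x) = ENNReal.ofReal (∫ x in S, g₀ x) := fun S =>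
    (ofReal_integral_eq_lintegral_ofReal hgi.integrableOn (Filter.Eventually.of_forall hg0)).symm
  have hmem : ∀ x, ENNReal.ofReal (g₀ x) ≠ 0 → x ∈ interior K ∧ x ∈ C := by
    intro x hx
    by_contra hcon
    apply hx
    by_cases hxC : x ∈ C
    · have : x ∉ interior K := fun h => hcon ⟨h, hxC⟩
      have h0 : F x = 0 := indicator_of_notMem this _
      rw [hg₀, indicator_of_mem hxC, h0, ENNReal.ofReal_zero]
    · simp [g₀, hxC]
  have hval : ∀ x, x ∈ interior K → x ∈ C → g₀ x = f x := by
    intro x h1 h2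
    simp [g₀, F, h1, h2]
  have hHM : ∀ s t : ℝ≥0, 0 < s → 0 < t → s + t = 1 → ∀ x y,
      HM m s t (ENNReal.ofReal (g₀ x)) (ENNReal.ofReal (g₀ y))
        (ENNReal.ofReal (g₀ ((s:ℝ) • x + (t:ℝ) • y))) := by
    intro s t hs ht hst x y
    by_cases hx : ENNReal.ofReal (g₀ x) = 0
    · intro c p q _ _ h1 _
      rw [hx, zero_mul] at h1
      exact h1.trans zero_le
    by_cases hy : ENNReal.ofReal (g₀ y) = 0
    · intro c p q _ _ _ h1
      rw [hy, zero_mul] at h1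
      exact h1.trans zero_le
    obtain ⟨xK, xC⟩ := hmem x hx
    obtain ⟨yK, yC⟩ := hmem y hy
    have hst' : (s : ℝ) + t = 1 := by exact_mod_cast hst
    have zK := hK.interior xK yK s.2 t.2 hst'
    have zC := hCc xC yC s.2 t.2 hst'
    simp only [NNReal.val_eq_coe] at zK zC
    rw [hval x xK xC, hval y yK yC, hval _ zK zC]
    have := hhc.2 (interior_subset xK) (interior_subset yK) s.2 t.2 hst'
    simp only [NNReal.val_eq_coe, smul_eq_mul] at this
    exact hm_scalar hm (hpos _ (interior_subset xK)) (hpos _ (interior_subset yK))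
      (hpos _ (interior_subset zK)) this
  have hfin : ∫⁻ x, ENNReal.ofReal (g₀ x) ≠ ∞ := by
    rw [← ofReal_integral_eq_lintegral_ofReal hgi (Filter.Eventually.of_forall hg0)]
    exact ENNReal.ofReal_ne_top
  have key := thin_iso (g := fun x => ENNReal.ofReal (g₀ x)) hgm.ennreal_ofReal hfin hHM
    (D := D) (δ := δ)
    (fun x y hx hy => hdiam x (interior_subset (hmem x hx).1) y (interior_subset (hmem y hy).1))
    he hm₁ hm₂ hm₃ hcover
    (fun x hxS y hyS hx hy => (hee x (hmem x hx).2 y (hmem y hy).2 (hsep x hxS y hyS)).le)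
  rw [hlint, hlint, hlint] at key
  have hfinal : ∀ S, 0 < δ / D * (∫ x in S, g₀ x) - (∫ x in S₃, g₀ x) →
      ¬ (ENNReal.ofReal δ * ENNReal.ofReal (∫ x in S, g₀ x) ≤
        ENNReal.ofReal D * ENNReal.ofReal (∫ x in S₃, g₀ x)) := by
    intro S hp hle
    have hn3 : 0 ≤ ∫ x in S₃, g₀ x := integral_nonneg hg0
    rw [← ENNReal.ofReal_mul hδ0.le, ← ENNReal.ofReal_mul hD.le,
      ENNReal.ofReal_le_ofReal_iff (by positivity)] at hle
    have : δ / D * (∫ x in S, g₀ x) ≤ ∫ x in S₃, g₀ x := by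
      rw [div_mul_eq_mul_div, div_le_iff₀ hD]
      linarith
    linarith
  rcases key with h | h
  · exact hfinal S₁ p1 h
  · exact hfinal S₂ p2 h


end helpers

theorem isoperimetry_of_harmonic_concave {n : ℕ} (hn : 2 ≤ n)
    (f : EuclideanSpace ℝ (Fin n) → ℝ) (K : Set (EuclideanSpace ℝ (Fin n)))
    (hK : Convex ℝ K) (hpos : ∀ x ∈ K, 0 < f x) (hzero : ∀ x ∉ K, f x = 0)
    (hint : Integrable f)
    (hhc : ConvexOn ℝ K (fun x => f x ^ (-(1 / ((n:ℝ) - 1)))))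
    (D : ℝ) (hD : 0 < D) (hdiam : ∀ x ∈ K, ∀ y ∈ K, dist x y ≤ D)
    (S₁ S₂ S₃ : Set (EuclideanSpace ℝ (Fin n)))
    (hm₁ : MeasurableSet S₁) (hm₂ : MeasurableSet S₂) (hm₃ : MeasurableSet S₃)
    (hcover : S₁ ∪ S₂ ∪ S₃ = univ)
    (hd₁₂ : Disjoint S₁ S₂) (hd₁₃ : Disjoint S₁ S₃) (hd₂₃ : Disjoint S₂ S₃)
    (dd : ℝ) (hdd : 0 ≤ dd) (hsep : ∀ u ∈ S₁, ∀ v ∈ S₂, dd ≤ dist u v) :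
    (dd / D) * min ((∫ x in S₁, f x) / ∫ x, f x) ((∫ x in S₂, f x) / ∫ x, f x) ≤
      (∫ x in S₃, f x) / ∫ x, f x := by
  obtain ⟨m, rfl⟩ : ∃ m, n = m + 1 := ⟨n - 1, by omega⟩
  have hm : m ≠ 0 := by omega
  have hex : -(1 / (((m + 1 : ℕ) : ℝ) - 1)) = -(1 / (m : ℝ)) := by
    push_cast
    rw [add_sub_cancel_right]
  rw [hex] at hhc
  have hcore := iso_core hm f K hK hpos hzero hint hhc D hD hdiam S₁ S₂ S₃ hm₁ hm₂ hm₃ hcover dd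
    hdd hsep
  have hf0 : 0 ≤ ∫ x, f x := integral_nonneg fun x => by
    by_cases hx : x ∈ K
    · exact (hpos x hx).le
    · exact (hzero x hx).ge
  rw [min_div_div_right hf0, ← mul_div_assoc]
  exact div_le_div_of_nonneg_right hcore hf0
end
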